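/- arXiv:1907.00885 — 3 statements merged into one kernel-verified Lean document; each statement's English description precedes it below -/
import Mathlib

section
/- Let k ≥ 3 be an integer and let 𝒜 = {A_1, …, A_n} be a finite family of subsets of ℝ² satisfying: (i) f_{k+1}(𝒜) = 0, and (ii) for every σ ⊆ {1, …, n} with |σ| ∈ {k, k+1}, the set A_σ is empty, or a single point, or both open and path-connected. Then f_k(𝒜) ≤ (1/(k−2)) · f^{ind}_{k-1}(𝒜). -/
/-- `fNum A k` is `f_k(𝒜)`: the number of subsets `σ` of the index set with
`|σ| = k+1` such that `⋂ i ∈ σ, A i` is nonempty. -/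
noncomputable def fNum {α : Type*} {n : ℕ} (A : Fin n → Set α) (k : ℕ) : ℕ :=
  Nat.card {σ : Finset (Fin n) // σ.card = k + 1 ∧ (⋂ i ∈ σ, A i).Nonempty}

/-- `fInd A k` is `f_k^{ind}(𝒜)`: the number of subsets `τ` with `|τ| = k+1` and
`⋂ i ∈ τ, A i ≠ ∅` for which there is `σ ⊃ τ` with `|σ| = k+2` and `⋂ i ∈ σ, A i ≠ ∅`. -/
noncomputable def fInd {α : Type*} {n : ℕ} (A : Fin n → Set α) (k : ℕ) : ℕ :=
  Nat.card {τ : Finset (Fin n) // τ.card = k + 1 ∧ (⋂ i ∈ τ, A i).Nonempty ∧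
    ∃ σ : Finset (Fin n), τ ⊂ σ ∧ σ.card = k + 2 ∧ (⋂ i ∈ σ, A i).Nonempty}


namespace PlanarUB

/-- Edges of the grid `ℤ²`: `(z, true)` is horizontal from `z`, `(z, false)` is vertical. -/
abbrev Ed := (ℤ × ℤ) × Bool

def src (e : Ed) : ℤ × ℤ := e.1
def tgt (e : Ed) : ℤ × ℤ := if e.2 then (e.1.1 + 1, e.1.2) else (e.1.1, e.1.2 + 1)
/-- the unit squares on the two sides of an edge -/
def sqA (e : Ed) : ℤ × ℤ := e.1
def sqB (e : Ed) : ℤ × ℤ := if e.2 then (e.1.1, e.1.2 - 1) else (e.1.1 - 1, e.1.2)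

def gadj (z w : ℤ × ℤ) : Prop := ∃ e : Ed, (src e = z ∧ tgt e = w) ∨ (src e = w ∧ tgt e = z)

lemma gadj_symm {z w : ℤ × ℤ} (h : gadj z w) : gadj w z := by
  obtain ⟨e, he⟩ := h
  exact ⟨e, he.symm⟩

/-- mod 2 boundary -/
noncomputable def bd : (Ed →₀ ZMod 2) →ₗ[ZMod 2] (ℤ × ℤ → ZMod 2) where
  toFun c z := c (z, true) + c (z, false) + c ((z.1 - 1, z.2), true) + c ((z.1, z.2 - 1), false)
  map_add' c d := by funext z; simp only [Finsupp.add_apply, Pi.add_apply]; ring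
  map_smul' r c := by
    funext z; simp only [Finsupp.smul_apply, Pi.smul_apply, smul_eq_mul, RingHom.id_apply]; ring

lemma bd_apply (c : Ed →₀ ZMod 2) (z : ℤ × ℤ) : bd c z =
    c (z, true) + c (z, false) + c ((z.1 - 1, z.2), true) + c ((z.1, z.2 - 1), false) := rfl

lemma add_self_two (x : ZMod 2) : x + x = 0 := CharTwo.add_self_eq_zero x

lemma bd_single (e : Ed) : bd (Finsupp.single e 1) = Pi.single (src e) 1 + Pi.single (tgt e) 1 := by
  funext ⟨i, j⟩
  obtain ⟨⟨a, b⟩, c⟩ := e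
  cases c
  · have h1 : (a = i ∧ b = j - 1) ↔ (i = a ∧ j = b + 1) := by omega
    have h2 : (a = i ∧ b = j) ↔ (i = a ∧ j = b) := by omega
    simp [bd_apply, src, tgt, Finsupp.single_apply, Pi.single_apply, h1, h2]
  · have h1 : (a = i - 1 ∧ b = j) ↔ (i = a + 1 ∧ j = b) := by omega
    have h2 : (a = i ∧ b = j) ↔ (i = a ∧ j = b) := by omega
    simp [bd_apply, src, tgt, Finsupp.single_apply, Pi.single_apply, h1, h2]

/-- Exactness: every finite cycle of the grid is the boundary of a set of squares. -/
lemma exact_grid (c : Ed →₀ ZMod 2) (hc : bd c = 0) :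
    ∃ q : ℤ × ℤ → ZMod 2, ∀ e, c e = q (sqA e) + q (sqB e) := by
  obtain ⟨M, hM⟩ : ∃ M : ℤ, ∀ i j b, i ≤ M → c ((i, j), b) = 0 := by
    obtain ⟨M, hM⟩ := (c.support.image (fun e => e.1.1)).bddBelow
    refine ⟨M - 1, fun i j b hi => ?_⟩
    by_contra h
    have := hM (a := i) (by
      simp only [Finset.coe_image, Set.mem_image, Finset.mem_coe, Finsupp.mem_support_iff]
      exact ⟨((i, j), b), h, rfl⟩)
    omega
  let q : ℤ × ℤ → ZMod 2 := fun s => ∑ t ∈ Finset.range (s.1 - M).toNat, c ((M + 1 + t, s.2), false)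
  have hq0 : ∀ i j, i ≤ M → q (i, j) = 0 := by
    intro i j hi
    have : (i - M).toNat = 0 := by omega
    simp [q, this]
  have hstep : ∀ i j, q (i, j) = q (i - 1, j) + c ((i, j), false) := by
    intro i j
    by_cases hi : i ≤ M
    · rw [hq0 _ _ hi, hq0 _ _ (by omega), hM _ _ _ hi]; simp
    · have h1 : (i - M).toNat = (i - 1 - M).toNat + 1 := by omega
      have h2 : M + 1 + ((i - 1 - M).toNat : ℤ) = i := by omega
      simp only [q]
      rw [h1, Finset.sum_range_succ, h2]
  have hh : ∀ (m : ℕ) j, c ((M + m, j), true) = q (M + m, j) + q (M + m, j - 1) := by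
    intro m j
    induction m with
    | zero => simp [hM, hq0]
    | succ m ih =>
      rw [hstep (M + (m + 1 : ℕ)) j, hstep (M + (m + 1 : ℕ)) (j - 1)]
      have h3 : M + ((m + 1 : ℕ) : ℤ) - 1 = M + m := by push_cast; ring
      have := congrFun hc (M + ((m + 1 : ℕ) : ℤ), j)
      rw [bd_apply] at this
      simp only [h3] at this ⊢
      rw [ih] at this
      simp only [Pi.zero_apply] at this
      have h4 : ∀ x y z w v : ZMod 2, x + y + (z + w) + v = 0 → x = z + y + (w + v) := by decide
      exact h4 _ _ _ _ _ this
  refine ⟨q, ?_⟩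
  rintro ⟨⟨i, j⟩, b⟩
  cases b
  · simp only [sqA, sqB]
    have := hstep i j
    have h4 : ∀ x y z : ZMod 2, x = y + z → z = x + y := by decide
    simpa using h4 _ _ _ this
  · simp only [sqA, sqB]
    by_cases hi : i ≤ M
    · simp [hM _ _ _ hi, hq0 _ _ hi]
    · have := hh (i - M).toNat j
      have h5 : M + ((i - M).toNat : ℤ) = i := by omega
      rw [h5] at this
      simpa using this

def conn (X : Set (ℤ × ℤ)) (z w : ℤ × ℤ) : Prop :=
  Relation.ReflTransGen (fun a b => gadj a b ∧ a ∈ X ∧ b ∈ X) z w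

lemma exists_chain {X : Set (ℤ × ℤ)} {z w : ℤ × ℤ} (h : conn X z w) :
    ∃ c : Ed →₀ ZMod 2, (∀ e, c e ≠ 0 → src e ∈ X ∧ tgt e ∈ X) ∧
      bd c = Pi.single z 1 + Pi.single w 1 := by
  induction h with
  | refl => 
    refine ⟨0, by simp, ?_⟩
    funext x
    simp [add_self_two]
  | tail _ hbc ih =>
    rename_i b d _
    obtain ⟨c, hc, hb⟩ := ih
    obtain ⟨⟨e, he⟩, hbX, hdX⟩ := hbc
    refine ⟨c + Finsupp.single e 1, ?_, ?_⟩
    · intro e' he'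
      by_cases h : e = e'
      · subst h
        rcases he with ⟨h1, h2⟩ | ⟨h1, h2⟩ <;> rw [h1, h2] <;> exact ⟨by assumption, by assumption⟩
      · apply hc
        simpa [Finsupp.single_apply, h] using he'
    · rw [map_add, hb, bd_single]
      have h4 : ∀ x y z : ZMod 2, x + y + (y + z) = x + z := by decide
      have h5 : ∀ x y z : ZMod 2, x + y + (z + y) = x + z := by decide
      rcases he with ⟨h1, h2⟩ | ⟨h1, h2⟩ <;> rw [h1, h2] <;> funext x <;>
        simp only [Pi.add_apply, h4, h5]

/-- star of a vertex -/
noncomputable def star (z : ℤ × ℤ) : Ed →₀ ZMod 2 :=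
  Finsupp.single (z, true) 1 + Finsupp.single (z, false) 1 +
    Finsupp.single ((z.1 - 1, z.2), true) 1 + Finsupp.single ((z.1, z.2 - 1), false) 1

lemma star_apply (z : ℤ × ℤ) (e : Ed) :
    star z e = (if src e = z then 1 else 0) + (if tgt e = z then 1 else 0) := by
  obtain ⟨i, j⟩ := z
  obtain ⟨⟨a, b⟩, c⟩ := e
  cases c
  · have h1 : (i = a ∧ j - 1 = b) ↔ (a = i ∧ b + 1 = j) := by omega
    have h2 : (i = a ∧ j = b) ↔ (a = i ∧ b = j) := by omega
    simp [star, src, tgt, Finsupp.single_apply, h1, h2]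
  · have h1 : (i - 1 = a ∧ j = b) ↔ (a + 1 = i ∧ b = j) := by omega
    have h2 : (i = a ∧ j = b) ↔ (a = i ∧ b = j) := by omega
    simp [star, src, tgt, Finsupp.single_apply, h1, h2]

lemma star_pair (q : ℤ × ℤ → ZMod 2) (z : ℤ × ℤ) :
    Finsupp.linearCombination (ZMod 2) (fun e => q (sqA e) + q (sqB e)) (star z) = 0 := by
  simp only [star, map_add, Finsupp.linearCombination_single, sqA, sqB, one_smul, if_true]
  simp only [Bool.false_eq_true, if_false]
  have h : ∀ x y z w : ZMod 2, x + y + (x + z) + (z + w) + (y + w) = 0 := by decide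
  exact h _ _ _ _

open Classical in
lemma star_sum (X : Finset (ℤ × ℤ)) (q : ℤ × ℤ → ZMod 2) (B : Finset Ed)
    (hB : ∀ e, e ∉ B → (q (sqA e) + q (sqB e) = 0 ∨ (src e ∈ X ↔ tgt e ∈ X))) :
    ∑ e ∈ B, (q (sqA e) + q (sqB e)) * 
      ((if src e ∈ X then 1 else 0) + (if tgt e ∈ X then 1 else 0)) = 0 := by
  set c : Ed →₀ ZMod 2 := ∑ z ∈ X, star z with hc
  have hce : ∀ e, c e = (if src e ∈ X then 1 else 0) + (if tgt e ∈ X then 1 else 0) := by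
    intro e
    rw [hc, Finsupp.finsetSum_apply]
    simp only [star_apply, Finset.sum_add_distrib, Finset.sum_ite_eq]
  have h0 : Finsupp.linearCombination (ZMod 2) (fun e => q (sqA e) + q (sqB e)) c = 0 := by
    rw [hc, map_sum]
    exact Finset.sum_eq_zero fun z _ => star_pair q z
  rw [Finsupp.linearCombination_apply, Finsupp.sum] at h0
  have h1 : ∑ᶠ e, c e * (q (sqA e) + q (sqB e)) = 0 := by
    rw [finsum_eq_sum_of_support_subset (s := c.support)]
    · exact h0
    · intro e he
      simp only [Function.mem_support] at he
      simpa using left_ne_zero_of_mul he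
  rw [finsum_eq_sum_of_support_subset (s := B)] at h1
  · refine Eq.trans (Finset.sum_congr rfl fun e _ => ?_) h1
    rw [hce, mul_comm]
  · intro e he
    by_contra hne
    apply he
    rcases hB e (by simpa using hne) with h | h
    · simp [h]
    · show c e * (q (sqA e) + q (sqB e)) = 0
      rw [hce]
      by_cases hs : src e ∈ X
      · simp [hs, h.1 hs, add_self_two]
      · have : tgt e ∉ X := fun h' => hs (h.2 h')
        simp [hs, this]

end PlanarUB

namespace PlanarUB

/-- boundary operator of an abstract finite graph -/
noncomputable def bd' {S E : Type*} [Fintype E] [DecidableEq S] (a b : E → S) :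
    (E → ZMod 2) →ₗ[ZMod 2] (S → ZMod 2) where
  toFun w s := ∑ e, w e * ((if a e = s then 1 else 0) + (if b e = s then 1 else 0))
  map_add' w v := by
    funext s; simp only [Pi.add_apply, add_mul, Finset.sum_add_distrib]
  map_smul' r w := by
    funext s; simp only [Pi.smul_apply, smul_eq_mul, RingHom.id_apply, mul_assoc, Finset.mul_sum]

/-- nonzero cycles of a simple graph have at least three edges -/
lemma three_le_supp {S E : Type*} [Fintype E] [DecidableEq S] [DecidableEq E] (a b : E → S)
    (hab : ∀ e, a e ≠ b e) (hinj : ∀ e e', s(a e, b e) = s(a e', b e') → e = e')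
    (w : E → ZMod 2) (hw : bd' a b w = 0) (hne : w ≠ 0) :
    3 ≤ (Finset.univ.filter fun e => w e ≠ 0).card := by
  obtain ⟨e, he⟩ : ∃ e, w e ≠ 0 := by
    by_contra h; push Not at h; exact hne (funext h)
  have key : ∀ s, (a e = s ∨ b e = s) → ∃ e', e' ≠ e ∧ w e' ≠ 0 ∧ (a e' = s ∨ b e' = s) := by
    intro s hs
    by_contra hcon
    push Not at hcon
    have h := congrFun hw s
    simp only [bd', LinearMap.coe_mk, AddHom.coe_mk, Pi.zero_apply] at h
    rw [Finset.sum_eq_single e] at h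
    · have : ((if a e = s then 1 else 0) + (if b e = s then 1 else 0) : ZMod 2) = 1 := by
        rcases hs with hs | hs
        · have : b e ≠ s := fun h' => hab e (hs.trans h'.symm)
          simp [hs, this]
        · have : a e ≠ s := fun h' => hab e (h'.trans hs.symm)
          simp [hs, this]
      rw [this, mul_one] at h
      exact he h
    · intro e' _ hne'
      by_cases h0 : w e' = 0
      · simp [h0]
      · have := hcon e' hne' h0
        simp [this.1, this.2]
    · simp
  obtain ⟨e2, h2, h2w, h2s⟩ := key (a e) (Or.inl rfl)
  obtain ⟨e3, h3, h3w, h3s⟩ := key (b e) (Or.inr rfl)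
  have h23 : e2 ≠ e3 := by
    rintro rfl
    apply h2
    apply hinj
    have := hab e
    rcases h2s with h | h <;> rcases h3s with h' | h'
    · exact absurd (h.symm.trans h') this
    · rw [h, h']
    · rw [h, h']; exact Sym2.eq_swap
    · exact absurd (h.symm.trans h') this
  have : ({e, e2, e3} : Finset E).card = 3 := by
    rw [Finset.card_eq_three]; exact ⟨e, e2, e3, h2.symm, h3.symm, h23, rfl⟩
  rw [← this]
  apply Finset.card_le_card
  intro x hx
  simp only [Finset.mem_insert, Finset.mem_singleton] at hx
  simp only [Finset.mem_filter, Finset.mem_univ, true_and]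
  rcases hx with rfl | rfl | rfl <;> assumption

open Classical in
/-- abstract dimension count -/
lemma dim_count {S E F : Type*} [Fintype S] [Fintype E] (a b : E → S)
    (hab : ∀ e, a e ≠ b e) (hinj : ∀ e e', s(a e, b e) = s(a e', b e') → e = e')
    (pA pB : E → F)
    (hZ : ∀ f, bd' a b (fun e => (if pA e = f then 1 else 0) + (if pB e = f then 1 else 0)) = 0)
    (hgen : ∀ w, bd' a b w = 0 → ∃ Q : F → ZMod 2, ∀ e, w e = Q (pA e) + Q (pB e)) :
    Fintype.card E ≤ 3 * Fintype.card S := by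
  let φ : F → E → ZMod 2 := fun f e => (if pA e = f then 1 else 0) + (if pB e = f then 1 else 0)
  let F0 : Finset F := Finset.univ.image pA ∪ Finset.univ.image pB
  let F1 : Finset F := F0.filter fun f => φ f ≠ 0
  have hspan : LinearMap.ker (bd' a b) ≤ Submodule.span (ZMod 2) ((F1.image φ : Finset _) : Set (E → ZMod 2)) := by
    intro w hw
    obtain ⟨Q, hQ⟩ := hgen w hw
    have : w = ∑ f ∈ F0, Q f • φ f := by
      funext e
      rw [Finset.sum_apply, hQ]
      have hA : pA e ∈ F0 := by simp [F0]
      have hB : pB e ∈ F0 := by simp [F0]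
      simp [φ, mul_add, Finset.sum_add_distrib, hA, hB]
    rw [this]
    refine Submodule.sum_mem _ fun f hf => ?_
    by_cases h0 : φ f = 0
    · simp [h0]
    · apply Submodule.smul_mem
      apply Submodule.subset_span
      simp only [Finset.coe_image, Set.mem_image, Finset.mem_coe]
      exact ⟨f, by simp [F1, hf, h0], rfl⟩
  have h1 : Module.finrank (ZMod 2) (LinearMap.ker (bd' a b)) ≤ F1.card :=
    (Submodule.finrank_mono hspan).trans ((finrank_span_finset_le_card _).trans Finset.card_image_le)
  have h2 : Fintype.card E ≤ Fintype.card S + Module.finrank (ZMod 2) (LinearMap.ker (bd' a b)) := by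
    have := LinearMap.finrank_range_add_finrank_ker (bd' a b)
    have h3 := Submodule.finrank_le (LinearMap.range (bd' a b))
    rw [Module.finrank_fintype_fun_eq_card] at this h3
    omega
  have h3 : 3 * F1.card ≤ 2 * Fintype.card E := by
    calc 3 * F1.card = ∑ f ∈ F1, 3 := by simp [mul_comm]
      _ ≤ ∑ f ∈ F1, (Finset.univ.filter fun e => φ f e ≠ 0).card := by
        refine Finset.sum_le_sum fun f hf => ?_
        exact three_le_supp a b hab hinj (φ f) (hZ f) (by simp [F1] at hf; exact hf.2)
      _ = ∑ e, (F1.filter fun f => φ f e ≠ 0).card := by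
        simp only [Finset.card_filter]
        exact Finset.sum_comm
      _ ≤ ∑ e : E, 2 := by
        refine Finset.sum_le_sum fun e _ => ?_
        refine (Finset.card_le_card (t := {pA e, pB e}) ?_).trans Finset.card_le_two
        intro f hf
        simp only [Finset.mem_filter] at hf
        by_contra hcon
        simp only [Finset.mem_insert, Finset.mem_singleton, not_or] at hcon
        apply hf.2
        simp [φ, Ne.symm hcon.1, Ne.symm hcon.2]
      _ = 2 * Fintype.card E := by simp [mul_comm]
  omega

open Classical in
theorem planar_edge_bound {S : Type*} [Fintype S] (G : SimpleGraph S) (X : S → Finset (ℤ × ℤ))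
    (hdis : ∀ s t z, z ∈ X s → z ∈ X t → s = t)
    (hconn : ∀ s, ∀ z ∈ X s, ∀ w ∈ X s, conn (X s) z w)
    (hadj : ∀ s t, G.Adj s t → ∃ z ∈ X s, ∃ w ∈ X t, gadj z w) :
    Nat.card G.edgeSet ≤ 3 * Fintype.card S := by
  rw [Nat.card_eq_fintype_card]
  have hex : ∀ e : G.edgeSet, ∃ a b : S, ∃ g : Ed, e.1 = s(a, b) ∧ src g ∈ X a ∧ tgt g ∈ X b := by
    rintro ⟨e, he⟩
    induction e using Sym2.ind with
    | _ a b =>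
      obtain ⟨z, hz, w, hw, g, hg | hg⟩ := hadj a b he
      · exact ⟨a, b, g, rfl, hg.1 ▸ hz, hg.2 ▸ hw⟩
      · exact ⟨b, a, g, Sym2.eq_swap, hg.1 ▸ hw, hg.2 ▸ hz⟩
  choose a b g hs ha hb using hex
  have hab : ∀ e, a e ≠ b e := by
    intro e h
    have := e.2
    rw [hs, h] at this
    simp at this
  have hinj : ∀ e e', s(a e, b e) = s(a e', b e') → e = e' := by
    intro e e' h
    apply Subtype.ext
    rw [hs, hs, h]
  have ginj : Function.Injective g := by
    intro e e' h
    apply hinj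
    have h1 := ha e
    have h2 := hb e
    rw [h] at h1 h2
    rw [hdis _ _ _ h1 (ha e'), hdis _ _ _ h2 (hb e')]
  -- the subgraph
  let H : Ed → Prop := fun e => (∃ s, src e ∈ X s ∧ tgt e ∈ X s) ∨ ∃ e', g e' = e
  let R : ℤ × ℤ → ℤ × ℤ → Prop := fun x y => ∃ e, ¬ H e ∧ sqA e = x ∧ sqB e = y
  have hroot : ∃ r : S → ℤ × ℤ, ∀ s, ∀ z ∈ X s, conn (X s) z (r s) := by
    have : ∀ s, ∃ r, ∀ z ∈ X s, conn (X s) z r := by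
      intro s
      by_cases h : (X s).Nonempty
      · obtain ⟨r, hr⟩ := h
        exact ⟨r, fun z hz => hconn s z hz r hr⟩
      · exact ⟨(0, 0), fun z hz => absurd ⟨z, hz⟩ h⟩
    choose r hr using this
    exact ⟨r, hr⟩
  obtain ⟨r, hr⟩ := hroot
  have hPA := fun e => exists_chain (hr _ _ (ha e))
  have hPB := fun e => exists_chain (hr _ _ (hb e))
  choose PA hPA1 hPA2 using hPA
  choose PB hPB1 hPB2 using hPB
  refine dim_count a b hab hinj (fun e => Quot.mk R (sqA (g e))) (fun e => Quot.mk R (sqB (g e)))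
    ?_ ?_
  · intro f
    funext s
    let q : ℤ × ℤ → ZMod 2 := fun x => if Quot.mk R x = f then 1 else 0
    have := star_sum (X s) q (Finset.univ.image g) ?_
    · rw [Finset.sum_image (fun _ _ _ _ h => ginj h)] at this
      simp only [bd', LinearMap.coe_mk, AddHom.coe_mk, Pi.zero_apply]
      refine Eq.trans (Finset.sum_congr rfl fun e _ => ?_) this
      have h1 : src (g e) ∈ X s ↔ a e = s := ⟨fun h => hdis _ _ _ (ha e) h, fun h => h ▸ ha e⟩
      have h2 : tgt (g e) ∈ X s ↔ b e = s := ⟨fun h => hdis _ _ _ (hb e) h, fun h => h ▸ hb e⟩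
      simp only [h1, h2, q]
    · intro e he
      by_cases hH : H e
      · right
        rcases hH with ⟨t, h1, h2⟩ | ⟨e', rfl⟩
        · constructor
          · intro h; rwa [hdis _ _ _ h h1]
          · intro h; rwa [hdis _ _ _ h h2]
        · simp at he
      · left
        have : Quot.mk R (sqA e) = Quot.mk R (sqB e) := Quot.sound ⟨e, hH, rfl, rfl⟩
        simp only [q, this, add_self_two]
  · intro w hw
    let c : Ed →₀ ZMod 2 := ∑ e, w e • (Finsupp.single (g e) 1 + PA e + PB e)
    have hc0 : bd c = 0 := by
      have : bd c = ∑ s, bd' a b w s • Pi.single (r s) 1 := by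
        simp only [c, map_sum, map_smul, map_add, bd_single, hPA2, hPB2]
        simp only [bd', LinearMap.coe_mk, AddHom.coe_mk, Finset.sum_smul]
        rw [Finset.sum_comm]
        refine Finset.sum_congr rfl fun e _ => ?_
        funext x
        simp only [Pi.smul_apply, Pi.add_apply, Finset.sum_apply, smul_eq_mul, mul_assoc, add_mul,
          ← Finset.mul_sum, Finset.sum_add_distrib, ite_mul, one_mul, zero_mul, Finset.sum_ite_eq,
          Finset.mem_univ, if_true]
        congr 1
        have h4 : ∀ x y z w : ZMod 2, x + y + (x + z) + (y + w) = z + w := by decide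
        exact h4 _ _ _ _
      rw [this, hw]
      simp
    obtain ⟨q, hq⟩ := exact_grid c hc0
    have hcH : ∀ e, ¬ H e → c e = 0 := by
      intro e he
      simp only [c, Finsupp.finsetSum_apply]
      refine Finset.sum_eq_zero fun e' _ => ?_
      have h1 : PA e' e = 0 := by
        by_contra h
        exact he (Or.inl ⟨_, hPA1 _ _ h⟩)
      have h2 : PB e' e = 0 := by
        by_contra h
        exact he (Or.inl ⟨_, hPB1 _ _ h⟩)
      have h3 : g e' ≠ e := fun h => he (Or.inr ⟨e', h⟩)
      simp [h1, h2, h3]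
    have hcg : ∀ e, c (g e) = w e := by
      intro e
      have hnotboth : ∀ s, ¬ (src (g e) ∈ X s ∧ tgt (g e) ∈ X s) := by
        rintro s ⟨h1, h2⟩
        exact hab e ((hdis _ _ _ (ha e) h1).trans (hdis _ _ _ (hb e) h2).symm)
      simp only [c, Finsupp.finsetSum_apply]
      rw [Finset.sum_eq_single e]
      · have h1 : PA e (g e) = 0 := by
          by_contra h
          exact hnotboth _ (hPA1 _ _ h)
        have h2 : PB e (g e) = 0 := by
          by_contra h
          exact hnotboth _ (hPB1 _ _ h)
        simp [h1, h2]
      · intro e' _ hne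
        have h1 : PA e' (g e) = 0 := by
          by_contra h
          exact hnotboth _ (hPA1 _ _ h)
        have h2 : PB e' (g e) = 0 := by
          by_contra h
          exact hnotboth _ (hPB1 _ _ h)
        have h3 : g e' ≠ g e := fun h => hne (ginj h)
        simp [h1, h2, h3]
      · simp
    refine ⟨Quot.lift q ?_, ?_⟩
    · rintro x y ⟨e, he, rfl, rfl⟩
      have := hq e
      rw [hcH e he] at this
      have h4 : ∀ x y : ZMod 2, 0 = x + y → x = y := by decide
      exact h4 _ _ this
    · intro e
      rw [← hcg e, hq]

end PlanarUB

namespace PlanarUB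

lemma conn_mono {X Y : Set (ℤ × ℤ)} (h : X ⊆ Y) {z w} (hc : conn X z w) : conn Y z w :=
  Relation.ReflTransGen.mono (fun _ _ hab => ⟨hab.1, h hab.2.1, h hab.2.2⟩) z w hc

lemma conn_symm {X : Set (ℤ × ℤ)} {z w} (hc : conn X z w) : conn X w z := by
  induction hc with
  | refl => exact Relation.ReflTransGen.refl
  | tail _ hbc ih =>
    exact Relation.ReflTransGen.head ⟨gadj_symm hbc.1, hbc.2.2, hbc.2.1⟩ ih

lemma conn_trans {X : Set (ℤ × ℤ)} {z w u} (h : conn X z w) (h' : conn X w u) : conn X z u :=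
  Relation.ReflTransGen.trans h h'

/-- `z` can be joined to `W` inside `T` in `n` steps -/
def reach (T W : Set (ℤ × ℤ)) : ℕ → ℤ × ℤ → Prop
  | 0, z => z ∈ W
  | n + 1, z => ∃ y, gadj z y ∧ y ∈ T ∧ reach T W n y

open Classical in
lemma voronoi (T W : Set (ℤ × ℤ)) (hW : W ⊆ T) (hne : W.Nonempty)
    (hT : ∀ z ∈ T, ∀ w ∈ T, conn T z w) :
    ∃ root : ℤ × ℤ → ℤ × ℤ, (∀ z ∈ T, root z ∈ W) ∧ (∀ w ∈ W, root w = w) ∧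
      ∀ z ∈ T, conn {y | y ∈ T ∧ root y = root z} z (root z) := by
  obtain ⟨w0, hw0⟩ := hne
  have hex : ∀ z ∈ T, ∃ n, reach T W n z := by
    intro z hz
    have := hT z hz w0 (hW hw0)
    unfold conn at this
    induction this using Relation.ReflTransGen.head_induction_on with
    | refl => exact ⟨0, hw0⟩
    | head h _ ih =>
      obtain ⟨n, hn⟩ := ih h.2.2
      exact ⟨n + 1, _, h.1, h.2.2, hn⟩
  let d : ℤ × ℤ → ℕ := fun z => if h : ∃ n, reach T W n z then Nat.find h else 0
  have hd : ∀ z ∈ T, reach T W (d z) z := by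
    intro z hz
    simp only [d, dif_pos (hex z hz)]
    exact Nat.find_spec (hex z hz)
  have hdle : ∀ z n, reach T W n z → d z ≤ n := by
    intro z n h
    simp only [d, dif_pos (⟨n, h⟩ : ∃ n, reach T W n z)]
    exact Nat.find_min' _ h
  have hpar : ∀ z, ∃ y, z ∈ T → z ∉ W → gadj z y ∧ y ∈ T ∧ d z = d y + 1 := by
    intro z
    by_cases hz : z ∈ T ∧ z ∉ W
    · have h := hd z hz.1
      cases hm : d z with
      | zero => rw [hm] at h; exact absurd h hz.2
      | succ m =>
        rw [hm] at h
        obtain ⟨y, h1, h2, h3⟩ := h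
        refine ⟨y, fun _ _ => ⟨h1, h2, ?_⟩⟩
        have h4 := hdle y m h3
        have h5 := hdle z (d y + 1) ⟨y, h1, h2, hd y h2⟩
        omega
    · exact ⟨z, fun h1 h2 => absurd ⟨h1, h2⟩ hz⟩
  choose par hpar using hpar
  let root : ℤ × ℤ → ℤ × ℤ := fun z => par^[d z] z
  have hr0 : ∀ w ∈ W, root w = w := by
    intro w hw
    have : d w = 0 := Nat.le_zero.1 (hdle w 0 hw)
    simp [root, this]
  have hrs : ∀ z ∈ T, z ∉ W → root z = root (par z) := by
    intro z hz hzW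
    simp only [root]
    rw [(hpar z hz hzW).2.2, Function.iterate_succ_apply]
  have main : ∀ n, ∀ z ∈ T, d z = n → root z ∈ W ∧
      conn {y | y ∈ T ∧ root y = root z} z (root z) := by
    intro n
    induction n with
    | zero =>
      intro z hz hdz
      have : z ∈ W := by
        have := hd z hz
        rwa [hdz] at this
      rw [hr0 z this]
      exact ⟨this, Relation.ReflTransGen.refl⟩
    | succ n ih =>
      intro z hz hdz
      by_cases hzW : z ∈ W
      · rw [hr0 z hzW]
        exact ⟨hzW, Relation.ReflTransGen.refl⟩
      · obtain ⟨h1, h2, h3⟩ := hpar z hz hzW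
        have h4 := hrs z hz hzW
        obtain ⟨h5, h6⟩ := ih (par z) h2 (by omega)
        rw [← h4] at h5 h6
        exact ⟨h5, Relation.ReflTransGen.head ⟨h1, ⟨hz, rfl⟩, ⟨h2, h4.symm⟩⟩ h6⟩
  exact ⟨root, fun z hz => (main _ z hz rfl).1, hr0, fun z hz => (main _ z hz rfl).2⟩

open Classical in
theorem grid_bound {S I : Type*} [Fintype S] [Fintype I] (inc : I → S → Prop)
    (W : S → Finset (ℤ × ℤ)) (T : I → Finset (ℤ × ℤ))
    (hWc : ∀ s, ∀ z ∈ W s, ∀ w ∈ W s, conn (W s) z w)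
    (hTc : ∀ τ, ∀ z ∈ T τ, ∀ w ∈ T τ, conn (T τ) z w)
    (hWd : ∀ s t z, z ∈ W s → z ∈ W t → s = t)
    (hTW : ∀ τ s, inc τ s → ∃ z, z ∈ T τ ∧ z ∈ W s)
    (hTW' : ∀ τ s z, z ∈ T τ → z ∈ W s → inc τ s)
    (hTT : ∀ τ τ' z, τ ≠ τ' → z ∈ T τ → z ∈ T τ' → ∃ s, z ∈ W s)
    (hne : ∀ τ, ∃ s, inc τ s)
    (huniq : ∀ s t τ τ', s ≠ t → inc τ s → inc τ t → inc τ' s → inc τ' t → τ = τ') :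
    ∑ τ, Nat.card {s // inc τ s} ≤ 3 * Nat.card S + Nat.card I := by
  simp only [Nat.card_eq_fintype_card]
  have hv : ∀ τ, ∃ root : ℤ × ℤ → ℤ × ℤ,
      (∀ z ∈ T τ, root z ∈ T τ ∧ ∃ s, root z ∈ W s) ∧
      (∀ w ∈ T τ, (∃ s, w ∈ W s) → root w = w) ∧
      ∀ z ∈ T τ, conn {y | y ∈ T τ ∧ root y = root z} z (root z) := by
    intro τ
    obtain ⟨root, h1, h2, h3⟩ := voronoi (T τ) {z | z ∈ T τ ∧ ∃ s, z ∈ W s}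
      (fun z hz => hz.1)
      (by obtain ⟨s, hs⟩ := hne τ
          obtain ⟨z, hz, hz'⟩ := hTW τ s hs
          exact ⟨z, hz, s, hz'⟩) (hTc τ)
    exact ⟨root, h1, fun w h h' => h2 w ⟨h, h'⟩, h3⟩
  choose root hr1 hr2 hr3 using hv
  let L : I → ℤ × ℤ → S → Prop := fun τ z s => z ∈ T τ ∧ root τ z ∈ W s
  have L_ex : ∀ τ, ∀ z ∈ T τ, ∃ s, L τ z s := fun τ z hz =>
    (hr1 τ z hz).2.imp fun s hs => ⟨hz, hs⟩
  have L_un : ∀ τ z s t, L τ z s → L τ z t → s = t := fun τ z s t h h' => hWd _ _ _ h.2 h'.2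
  have L_inc : ∀ τ z s, L τ z s → inc τ s := fun τ z s h =>
    hTW' τ s _ (hr1 τ z h.1).1 h.2
  have L_W : ∀ τ z s t, z ∈ W t → L τ z s → s = t := by
    intro τ z s t hz h
    have := h.2
    rw [hr2 τ z h.1 ⟨t, hz⟩] at this
    exact hWd _ _ _ this hz
  let X : S → Finset (ℤ × ℤ) := fun s =>
    W s ∪ Finset.univ.biUnion fun τ => (T τ).filter fun z => L τ z s
  have hX : ∀ s z, z ∈ X s ↔ z ∈ W s ∨ ∃ τ, L τ z s := by
    intro s z
    simp only [X, Finset.mem_union, Finset.mem_biUnion, Finset.mem_univ, true_and,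
      Finset.mem_filter]
    exact or_congr Iff.rfl (exists_congr fun τ => ⟨fun h => h.2, fun h => ⟨h.1, h⟩⟩)
  have hXd : ∀ s t z, z ∈ X s → z ∈ X t → s = t := by
    intro s t z h1 h2
    rw [hX] at h1 h2
    rcases h1 with h1 | ⟨τ, h1⟩ <;> rcases h2 with h2 | ⟨τ', h2⟩
    · exact hWd _ _ _ h1 h2
    · exact (L_W _ _ _ _ h1 h2).symm
    · exact L_W _ _ _ _ h2 h1
    · by_cases h : τ = τ'
      · subst h; exact L_un _ _ _ _ h1 h2
      · obtain ⟨u, hu⟩ := hTT τ τ' z h h1.1 h2.1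
        rw [L_W _ _ _ _ hu h1, L_W _ _ _ _ hu h2]
  have hXw : ∀ s, ∀ z ∈ X s, ∃ w ∈ W s, conn (X s) z w := by
    intro s z hz
    rcases (hX s z).1 hz with h | ⟨τ, h⟩
    · exact ⟨z, h, Relation.ReflTransGen.refl⟩
    · refine ⟨root τ z, h.2, conn_mono ?_ (hr3 τ z h.1)⟩
      rintro y ⟨hy1, hy2⟩
      refine (hX s y).2 (Or.inr ⟨τ, hy1, ?_⟩)
      rw [hy2]; exact h.2
  have hXc : ∀ s, ∀ z ∈ X s, ∀ w ∈ X s, conn (X s) z w := by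
    intro s z hz w hw
    obtain ⟨z', hz', h1⟩ := hXw s z hz
    obtain ⟨w', hw', h2⟩ := hXw s w hw
    refine conn_trans h1 (conn_trans (conn_mono ?_ (hWc s z' hz' w' hw')) (conn_symm h2))
    intro y hy
    exact (hX s y).2 (Or.inl hy)
  let Gt : ∀ τ, SimpleGraph {s // inc τ s} := fun τ =>
    { Adj := fun s t => s ≠ t ∧ ∃ z w, L τ z s ∧ L τ w t ∧ gadj z w
      symm := ⟨by
        rintro s t ⟨h, z, w, h1, h2, h3⟩
        exact ⟨h.symm, w, z, h2, h1, gadj_symm h3⟩⟩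
      loopless := ⟨fun s h => h.1 rfl⟩ }
  have hGc : ∀ τ, (Gt τ).Connected := by
    intro τ
    have : Nonempty {s // inc τ s} := let ⟨s, hs⟩ := hne τ; ⟨⟨s, hs⟩⟩
    refine ⟨?_⟩
    rintro ⟨s, hs⟩ ⟨t, ht⟩
    obtain ⟨z, hz, hzs⟩ := hTW τ s hs
    obtain ⟨w, hw, hwt⟩ := hTW τ t ht
    have hLz : L τ z s := ⟨hz, by rw [hr2 τ z hz ⟨s, hzs⟩]; exact hzs⟩
    have hLw : L τ w t := ⟨hw, by rw [hr2 τ w hw ⟨t, hwt⟩]; exact hwt⟩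
    have key : ∀ y, conn (T τ) z y → ∀ u (hu : inc τ u), L τ y u →
        (Gt τ).Reachable ⟨s, hs⟩ ⟨u, hu⟩ := by
      intro y hy
      induction hy with
      | refl =>
        intro u hu hLu
        have := L_un _ _ _ _ hLz hLu
        subst this
        exact SimpleGraph.Reachable.refl _
      | tail _ hbc ih =>
        rename_i b c _
        intro u hu hLu
        obtain ⟨v, hv⟩ := L_ex τ b hbc.2.1
        have h1 := ih v (L_inc _ _ _ hv) hv
        by_cases h : v = u
        · subst h; exact h1
        · refine h1.trans (SimpleGraph.Adj.reachable ?_)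
          exact ⟨fun h' => h (congrArg Subtype.val h'), b, c, hv, hLu, hbc.1⟩
    exact key w (hTc τ z hz w hw) t ht hLw
  let G : SimpleGraph S :=
    { Adj := fun s t => ∃ τ, ∃ (hs : inc τ s) (ht : inc τ t), (Gt τ).Adj ⟨s, hs⟩ ⟨t, ht⟩
      symm := ⟨by
        rintro s t ⟨τ, hs, ht, h⟩
        exact ⟨τ, ht, hs, h.symm⟩⟩
      loopless := ⟨by rintro s ⟨τ, hs, ht, h⟩; exact h.1 rfl⟩ }
  have hG := planar_edge_bound G X hXd hXc (by
    rintro s t ⟨τ, hs, ht, hne, z, w, h1, h2, h3⟩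
    exact ⟨z, (hX _ _).2 (Or.inr ⟨τ, h1⟩), w, (hX _ _).2 (Or.inr ⟨τ, h2⟩), h3⟩)
  have hmem : ∀ τ, ∀ e ∈ (Gt τ).edgeSet, Sym2.map Subtype.val e ∈ G.edgeSet := by
    intro τ e he
    induction e using Sym2.ind with
    | _ s t => exact ⟨τ, s.2, t.2, he⟩
  let F : (Σ τ, (Gt τ).edgeSet) → G.edgeSet := fun p => ⟨Sym2.map Subtype.val p.2.1, hmem p.1 _ p.2.2⟩
  have hF : Function.Injective F := by
    rintro ⟨τ, e, he⟩ ⟨τ', e', he'⟩ h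
    have h' : Sym2.map Subtype.val e = Sym2.map Subtype.val e' := congrArg Subtype.val h
    have hττ : τ = τ' := by
      induction e using Sym2.ind with
      | _ s t =>
      induction e' using Sym2.ind with
      | _ s' t' =>
        have hst : s.1 ≠ t.1 := fun h => (he : (Gt τ).Adj s t).1 (Subtype.ext h)
        simp only [Sym2.map_mk, Sym2.eq_iff] at h'
        rcases h' with ⟨h1, h2⟩ | ⟨h1, h2⟩
        · exact huniq _ _ τ τ' hst s.2 t.2 (h1 ▸ s'.2) (h2 ▸ t'.2)
        · exact huniq _ _ τ τ' hst s.2 t.2 (h1 ▸ t'.2) (h2 ▸ s'.2)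
    subst hττ
    have := Sym2.map.injective Subtype.val_injective h'
    subst this
    rfl
  have h1 : ∑ τ, Nat.card (Gt τ).edgeSet ≤ Nat.card G.edgeSet := by
    have := Nat.card_le_card_of_injective F hF
    rwa [Nat.card_sigma] at this
  have h2 : ∑ τ, Fintype.card {s // inc τ s} ≤ ∑ τ, (Nat.card (Gt τ).edgeSet + 1) := by
    refine Finset.sum_le_sum fun τ _ => ?_
    have := (hGc τ).card_vert_le_card_edgeSet_add_one
    simpa [Nat.card_eq_fintype_card] using this
  rw [Finset.sum_add_distrib] at h2
  simp only [Finset.sum_const, Finset.card_univ, smul_eq_mul, mul_one] at h2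
  omega

end PlanarUB

namespace PlanarUB
open Filter

abbrev Pl := EuclideanSpace ℝ (Fin 2)

lemma fatten {V : Set Pl} (hV : IsOpen V) (hpc : IsPathConnected V) {p : Pl} (hp : p ∈ V)
    {C : Set Pl} (hC : IsCompact C) (hCV : C ⊆ V) :
    ∃ D : Set Pl, IsCompact D ∧ IsPreconnected D ∧ p ∈ D ∧ C ⊆ interior D ∧ D ⊆ V := by
  refine IsCompact.induction_on (p := fun C => ∃ D : Set Pl, IsCompact D ∧ IsPreconnected D ∧ p ∈ D ∧ C ⊆ interior D ∧ D ⊆ V) hC ?_ ?_ ?_ ?_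
  · exact ⟨{p}, isCompact_singleton, isPreconnected_singleton, rfl, by simp, by simpa using hp⟩
  · rintro s t hst ⟨D, h1, h2, h3, h4, h5⟩
    exact ⟨D, h1, h2, h3, hst.trans h4, h5⟩
  · rintro s t ⟨D, h1, h2, h3, h4, h5⟩ ⟨D', h1', h2', h3', h4', h5'⟩
    refine ⟨D ∪ D', h1.union h1', h2.union p h3 h3' h2', Or.inl h3, ?_, Set.union_subset h5 h5'⟩
    exact Set.union_subset (h4.trans (interior_mono Set.subset_union_left))
      (h4'.trans (interior_mono Set.subset_union_right))
  · intro x hx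
    obtain ⟨r, hr, hrV⟩ := Metric.nhds_basis_closedBall.mem_iff.1 (hV.mem_nhds (hCV hx))
    obtain ⟨γ, hγ⟩ := hpc.joinedIn p hp x (hCV hx)
    refine ⟨Metric.ball x r, mem_nhdsWithin_of_mem_nhds (Metric.ball_mem_nhds x hr),
      Set.range γ ∪ Metric.closedBall x r, ?_, ?_, ?_, ?_, ?_⟩
    · exact (isCompact_range γ.continuous).union (isCompact_closedBall x r)
    · exact (isPreconnected_range γ.continuous).union x ⟨1, γ.target⟩
        (Metric.mem_closedBall_self hr.le) (convex_closedBall x r).isPreconnected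
    · exact Or.inl ⟨0, γ.source⟩
    · exact interior_maximal (Metric.ball_subset_closedBall.trans Set.subset_union_right)
        Metric.isOpen_ball
    · refine Set.union_subset ?_ hrV
      rintro _ ⟨t, rfl⟩
      exact hγ t

/-- grid points close to `K` at scale `1/m` -/
def Nb (m : ℝ) (K : Set Pl) : Set (ℤ × ℤ) :=
  {z | ∃ x ∈ K, |m * x 0 - z.1| < 1 ∧ |m * x 1 - z.2| < 1}

lemma gadj_h (a b : ℤ) {c : ℤ} (h : c = a + 1) : gadj (a, b) (c, b) :=
  ⟨((a, b), true), Or.inl ⟨rfl, by simp [tgt, h]⟩⟩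
lemma gadj_v (a b : ℤ) {c : ℤ} (h : c = b + 1) : gadj (a, b) (a, c) :=
  ⟨((a, b), false), Or.inl ⟨rfl, by simp [tgt, h]⟩⟩

lemma close_int {t : ℝ} {a b : ℤ} (ha : |t - a| < 1) (hb : |t - b| < 1) :
    a = b ∨ b = a + 1 ∨ a = b + 1 := by
  rw [abs_lt] at ha hb
  have h1 : (a : ℝ) < b + 2 := by linarith
  have h2 : (b : ℝ) < a + 2 := by linarith
  have h1' : a < b + 2 := by exact_mod_cast h1
  have h2' : b < a + 2 := by exact_mod_cast h2
  omega

lemma conn_box (m : ℝ) (K : Set Pl) (x : Pl) (hx : x ∈ K) (z w : ℤ × ℤ)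
    (hz : |m * x 0 - z.1| < 1 ∧ |m * x 1 - z.2| < 1)
    (hw : |m * x 0 - w.1| < 1 ∧ |m * x 1 - w.2| < 1) : conn (Nb m K) z w := by
  obtain ⟨a, b⟩ := z
  obtain ⟨c, d⟩ := w
  have m1 : (a, b) ∈ Nb m K := ⟨x, hx, hz⟩
  have m2 : (c, d) ∈ Nb m K := ⟨x, hx, hw⟩
  have m3 : (c, b) ∈ Nb m K := ⟨x, hx, hw.1, hz.2⟩
  have c1 : conn (Nb m K) (a, b) (c, b) := by
    rcases close_int hz.1 hw.1 with h | h | h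
    · simp only at h; subst h; exact Relation.ReflTransGen.refl
    · exact Relation.ReflTransGen.single ⟨gadj_h a b h, m1, m3⟩
    · exact Relation.ReflTransGen.single ⟨gadj_symm (gadj_h c b h), m1, m3⟩
  have c2 : conn (Nb m K) (c, b) (c, d) := by
    rcases close_int hz.2 hw.2 with h | h | h
    · simp only at h; subst h; exact Relation.ReflTransGen.refl
    · exact Relation.ReflTransGen.single ⟨gadj_v c b h, m3, m2⟩
    · exact Relation.ReflTransGen.single ⟨gadj_symm (gadj_v c d h), m3, m2⟩
  exact conn_trans c1 c2

lemma box_open (m : ℝ) (S : Set (ℤ × ℤ)) :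
    IsOpen {x : Pl | ∃ z ∈ S, |m * x 0 - z.1| < 1 ∧ |m * x 1 - z.2| < 1} := by
  have : {x : Pl | ∃ z ∈ S, |m * x 0 - z.1| < 1 ∧ |m * x 1 - z.2| < 1} =
      ⋃ z ∈ S, {x : Pl | |m * x 0 - z.1| < 1 ∧ |m * x 1 - z.2| < 1} := by
    ext x; simp only [Set.mem_ofPred_eq, Set.mem_iUnion, exists_prop]
  rw [this]
  refine isOpen_biUnion fun z _ => ?_
  rw [Set.ofPred_and]
  refine IsOpen.inter (isOpen_lt ?_ continuous_const) (isOpen_lt ?_ continuous_const) <;> fun_prop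

lemma floor_box (t : ℝ) : |t - (⌊t⌋ : ℤ)| < 1 := by
  rw [abs_lt]
  constructor <;> linarith [Int.floor_le t, Int.lt_floor_add_one t]

lemma Nb_mem_floor (m : ℝ) {K : Set Pl} {x : Pl} (hx : x ∈ K) :
    (⌊m * x 0⌋, ⌊m * x 1⌋) ∈ Nb m K := ⟨x, hx, floor_box _, floor_box _⟩

lemma Nb_conn (m : ℝ) {K : Set Pl} (hK : IsPreconnected K) :
    ∀ z ∈ Nb m K, ∀ w ∈ Nb m K, conn (Nb m K) z w := by
  intro z hz w hw
  by_contra hcon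
  obtain ⟨x, hx, hxz⟩ := id hz
  obtain ⟨y, hy, hyw⟩ := id hw
  obtain ⟨u, huK, ⟨a, ha, hua⟩, ⟨b, hb, hub⟩⟩ := hK _ _ (box_open m {a | conn (Nb m K) z a})
    (box_open m {a | ¬ conn (Nb m K) z a})
    (by
      intro u hu
      by_cases h : conn (Nb m K) z (⌊m * u 0⌋, ⌊m * u 1⌋)
      · exact Or.inl ⟨_, h, floor_box _, floor_box _⟩
      · exact Or.inr ⟨_, h, floor_box _, floor_box _⟩)
    ⟨x, hx, z, Relation.ReflTransGen.refl, hxz⟩ ⟨y, hy, w, hcon, hyw⟩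
  exact hb (conn_trans ha (conn_box m K u huK a b hua hub))

lemma Nb_finite (m : ℝ) {K : Set Pl} (hK : IsCompact K) : (Nb m K).Finite := by
  obtain ⟨R, hR⟩ := hK.isBounded.exists_norm_le
  obtain ⟨N, hN⟩ := exists_nat_gt (|m| * R + 1)
  refine (((Set.finite_Icc (-(N : ℤ)) N).prod (Set.finite_Icc (-(N : ℤ)) N))).subset ?_
  rintro ⟨a, b⟩ ⟨x, hx, h0, h1⟩
  have hb : ∀ i, |m * x i| ≤ |m| * R := by
    intro i
    rw [abs_mul]
    refine mul_le_mul_of_nonneg_left ?_ (abs_nonneg _)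
    have := PiLp.norm_apply_le x i
    rw [Real.norm_eq_abs] at this
    exact this.trans (hR x hx)
  have key : ∀ (i : Fin 2) (c : ℤ), |m * x i - c| < 1 → c ∈ Set.Icc (-(N : ℤ)) N := by
    intro i c hc
    have h2 := hb i
    rw [abs_lt] at hc
    rw [abs_le] at h2
    constructor
    · have : (-(N : ℝ)) ≤ c := by linarith
      exact_mod_cast this
    · have : (c : ℝ) ≤ N := by linarith
      exact_mod_cast this
  exact ⟨key 0 a h0, key 1 b h1⟩

lemma Nb_inter {K K' D : Set Pl} (hK : IsCompact K) (hK' : IsCompact K')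
    (h : K ∩ K' ⊆ interior D) : ∀ᶠ m : ℝ in atTop, Nb m K ∩ Nb m K' ⊆ Nb m D := by
  have hd : Disjoint (K \ interior D) K' := by
    rw [Set.disjoint_left]
    exact fun x hx hx' => hx.2 (h ⟨hx.1, hx'⟩)
  obtain ⟨δ, hδ, hdis⟩ := hd.exists_thickenings (hK.diff isOpen_interior) hK'.isClosed
  filter_upwards [eventually_gt_atTop (4 / δ), eventually_gt_atTop 0] with m hm hm0
  rintro z ⟨⟨x, hx, hx0, hx1⟩, ⟨y, hy, hy0, hy1⟩⟩
  refine ⟨x, ?_, hx0, hx1⟩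
  apply interior_subset
  by_contra hxD
  have hmδ : 4 < m * δ := by rwa [div_lt_iff₀ hδ] at hm
  have hdist : dist y x < δ := by
    have hc : ∀ i, |m * x i - m * y i| < 2 → |y i - x i| ≤ 2 / m := by
      intro i hi
      rw [le_div_iff₀ hm0]
      rw [← mul_sub, abs_mul, abs_of_pos hm0, abs_sub_comm] at hi
      linarith
    have h0 : |m * x 0 - m * y 0| < 2 := by
      rw [abs_lt] at *; constructor <;> linarith
    have h1 : |m * x 1 - m * y 1| < 2 := by
      rw [abs_lt] at *; constructor <;> linarith
    have e0 := hc 0 h0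
    have e1 := hc 1 h1
    rw [EuclideanSpace.dist_eq, Fin.sum_univ_two, Real.dist_eq, Real.dist_eq]
    refine lt_of_le_of_lt (b := 4 / m) ?_ (by rw [div_lt_iff₀ hm0]; linarith)
    rw [Real.sqrt_le_left (by positivity)]
    have e2 : |y 0 - x 0| ^ 2 ≤ (2 / m) ^ 2 := by gcongr
    have e3 : |y 1 - x 1| ^ 2 ≤ (2 / m) ^ 2 := by gcongr
    have e4 : (4 / m) ^ 2 = 4 * (2 / m) ^ 2 := by ring
    rw [e4]
    nlinarith [sq_nonneg (2 / m)]
  have hxK : x ∈ Metric.thickening δ (K \ interior D) :=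
    Metric.self_subset_thickening hδ _ ⟨hx, hxD⟩
  have hxK' : x ∈ Metric.thickening δ K' := by
    rw [Metric.mem_thickening_iff]
    exact ⟨y, hy, by rwa [dist_comm]⟩
  exact Set.disjoint_left.1 hdis hxK hxK'

end PlanarUB

namespace PlanarUB
open Filter

abbrev Sg (m n : ℕ) (P : Finset (Fin n) → Prop) := {σ : Finset (Fin n) // σ.card = m + 2 ∧ P σ}
abbrev Jg (m n : ℕ) (P : Finset (Fin n) → Prop) :=
  {τ : Finset (Fin n) // τ.card = m + 1 ∧ ∃ s t : Sg m n P, s ≠ t ∧ τ ⊆ s.1 ∧ τ ⊆ t.1}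

open Classical in
theorem core (m n : ℕ) (A : Fin n → Set Pl)
    (hempty : ∀ σ : Finset (Fin n), m + 3 ≤ σ.card → (⋂ i ∈ σ, A i) = ∅)
    (h2 : ∀ σ : Finset (Fin n), σ.card = m + 1 ∨ σ.card = m + 2 →
      (⋂ i ∈ σ, A i) = ∅ ∨ (∃ p, (⋂ i ∈ σ, A i) = {p}) ∨
        (IsOpen (⋂ i ∈ σ, A i) ∧ IsPathConnected (⋂ i ∈ σ, A i))) :
    ∑ τ : Jg m n (fun σ => (⋂ i ∈ σ, A i).Nonempty),
      Nat.card {s : Sg m n (fun σ => (⋂ i ∈ σ, A i).Nonempty) // τ.1 ⊆ s.1}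
    ≤ 3 * Nat.card (Sg m n (fun σ => (⋂ i ∈ σ, A i).Nonempty))
      + Nat.card (Jg m n (fun σ => (⋂ i ∈ σ, A i).Nonempty)) := by
  let S := Sg m n (fun σ => (⋂ i ∈ σ, A i).Nonempty)
  let J := Jg m n (fun σ => (⋂ i ∈ σ, A i).Nonempty)
  let V : Finset (Fin n) → Set Pl := fun σ => ⋂ i ∈ σ, A i
  have hVu : ∀ σ τ, V σ ∩ V τ = V (σ ∪ τ) := by
    intro σ τ
    ext x
    simp only [V, Set.mem_inter_iff, Set.mem_iInter, Finset.mem_union]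
    exact ⟨fun h i hi => hi.elim (h.1 i) (h.2 i), fun h => ⟨fun i hi => h i (Or.inl hi),
      fun i hi => h i (Or.inr hi)⟩⟩
  have hVm : ∀ σ τ : Finset (Fin n), σ ⊆ τ → V τ ⊆ V σ := fun σ τ h =>
    Set.biInter_subset_biInter_left h
  have hSS : ∀ s t : S, s ≠ t → V s.1 ∩ V t.1 = ∅ := by
    intro s t hst
    rw [hVu]
    apply hempty
    by_contra hlt
    have h1 := s.2.1
    have h2 := t.2.1
    have e1 := Finset.eq_of_subset_of_card_le (Finset.subset_union_left (s₁ := s.1) (s₂ := t.1)) (by omega)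
    have e2 := Finset.eq_of_subset_of_card_le (Finset.subset_union_right (s₁ := s.1) (s₂ := t.1)) (by omega)
    exact hst (Subtype.ext (e1.trans e2.symm))
  have hJS : ∀ (τ : J) (s : S), ¬ τ.1 ⊆ s.1 → V τ.1 ∩ V s.1 = ∅ := by
    intro τ s h
    rw [hVu]
    apply hempty
    by_contra hlt
    have h1 := s.2.1
    have e2 := Finset.eq_of_subset_of_card_le (Finset.subset_union_right (s₁ := τ.1) (s₂ := s.1)) (by omega)
    apply h
    rw [e2]
    exact Finset.subset_union_left
  have hunion : ∀ (τ τ' : J) (s : S), τ ≠ τ' → τ.1 ⊆ s.1 → τ'.1 ⊆ s.1 → τ.1 ∪ τ'.1 = s.1 := by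
    intro τ τ' s hne h h'
    apply Finset.eq_of_subset_of_card_le (Finset.union_subset h h')
    by_contra hlt
    have h1 := s.2.1
    have h3 := τ.2.1
    have h4 := τ'.2.1
    have e1 := Finset.eq_of_subset_of_card_le (Finset.subset_union_left (s₁ := τ.1) (s₂ := τ'.1)) (by omega)
    have e2 := Finset.eq_of_subset_of_card_le (Finset.subset_union_right (s₁ := τ.1) (s₂ := τ'.1)) (by omega)
    exact hne (Subtype.ext (e1.trans e2.symm))
  have hptex : ∀ s : S, ∃ p, p ∈ V s.1 := fun s => s.2.2
  choose pt hpt using hptex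
  have hJopen : ∀ τ : J, IsOpen (V τ.1) ∧ IsPathConnected (V τ.1) := by
    rintro ⟨τ, hτ, s, t, hst, hs, ht⟩
    have h1 := hVm _ _ hs (hpt s)
    have h3 := hVm _ _ ht (hpt t)
    rcases h2 τ (Or.inl hτ) with h | ⟨p, h⟩ | h
    · change V τ = ∅ at h
      rw [h] at h1; exact absurd h1 (Set.notMem_empty _)
    · change V τ = {p} at h
      rw [h, Set.mem_singleton_iff] at h1 h3
      have : pt s ∈ V s.1 ∩ V t.1 := ⟨hpt s, by rw [h1, ← h3]; exact hpt t⟩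
      rw [hSS s t hst] at this
      exact absurd this (Set.notMem_empty _)
    · exact h
  have hKex : ∀ τ : J, ∃ K : Set Pl, IsCompact K ∧ IsPreconnected K ∧ K ⊆ V τ.1 ∧
      ∀ s : S, τ.1 ⊆ s.1 → pt s ∈ K := by
    intro τ
    obtain ⟨s, -, -, hs, -⟩ := τ.2.2
    obtain ⟨D, h1, h3, h4, h5, h6⟩ := fatten (hJopen τ).1 (hJopen τ).2 (hVm _ _ hs (hpt s))
      (C := Set.range fun t : {t : S // τ.1 ⊆ t.1} => pt t.1) (Set.finite_range _).isCompact
      (by rintro _ ⟨t, rfl⟩; exact hVm _ _ t.2 (hpt t.1))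
    exact ⟨D, h1, h3, h6, fun t ht => interior_subset (h5 ⟨⟨t, ht⟩, rfl⟩)⟩
  choose K hK1 hK2 hK3 hK4 using hKex
  have hDex : ∀ s : S, ∃ D : Set Pl, IsCompact D ∧ IsPreconnected D ∧ pt s ∈ D ∧ D ⊆ V s.1 ∧
      ∀ τ τ' : J, τ ≠ τ' → τ.1 ⊆ s.1 → τ'.1 ⊆ s.1 → K τ ∩ K τ' ⊆ interior D := by
    intro s
    by_cases hs : IsOpen (V s.1) ∧ IsPathConnected (V s.1)
    · obtain ⟨D, h1, h3, h4, h5, h6⟩ := fatten hs.1 hs.2 (hpt s)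
        (C := ⋃ p : {p : J × J // p.1 ≠ p.2 ∧ p.1.1 ⊆ s.1 ∧ p.2.1 ⊆ s.1}, K p.1.1 ∩ K p.1.2)
        (isCompact_iUnion fun p => (hK1 _).inter (hK1 _))
        (by
          refine Set.iUnion_subset fun p => ?_
          have he := hunion p.1.1 p.1.2 s p.2.1 p.2.2.1 p.2.2.2
          have he2 := hVu p.1.1.1 p.1.2.1
          rw [he] at he2
          exact (Set.inter_subset_inter (hK3 _) (hK3 _)).trans he2.subset)
      refine ⟨D, h1, h3, h4, h6, fun τ τ' hne h h' => ?_⟩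
      exact (Set.subset_iUnion (fun p : {p : J × J // p.1 ≠ p.2 ∧ p.1.1 ⊆ s.1 ∧ p.2.1 ⊆ s.1} =>
        K p.1.1 ∩ K p.1.2) ⟨(τ, τ'), hne, h, h'⟩).trans h5
    · refine ⟨{pt s}, isCompact_singleton, isPreconnected_singleton, rfl,
        by simpa using hpt s, fun τ τ' hne h h' => ?_⟩
      exfalso
      have ho : IsOpen (V s.1) := by
        rw [← hunion τ τ' s hne h h', ← hVu]
        exact (hJopen τ).1.inter (hJopen τ').1
      rcases h2 s.1 (Or.inr s.2.1) with h3 | ⟨p, h3⟩ | h3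
      · change V s.1 = ∅ at h3
        have := hpt s
        rw [h3] at this; exact this
      · change V s.1 = {p} at h3
        rw [h3] at ho
        exact not_isOpen_singleton p ho
      · exact hs h3
  choose D hD1 hD2 hD3 hD4 hD5 using hDex
  have ev1 : ∀ᶠ r : ℝ in atTop, ∀ s t : S, s ≠ t → Nb r (D s) ∩ Nb r (D t) ⊆ Nb r ∅ := by
    rw [eventually_all]; intro s
    rw [eventually_all]; intro t
    by_cases h : s = t
    · exact Eventually.of_forall fun _ h' => absurd h h'
    · filter_upwards [Nb_inter (D := ∅) (hD1 s) (hD1 t) (by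
        rw [interior_empty, ← hSS s t h]
        exact Set.inter_subset_inter (hD4 s) (hD4 t))] with r hr _
      exact hr
  have ev2 : ∀ᶠ r : ℝ in atTop, ∀ (τ : J) (s : S), ¬ τ.1 ⊆ s.1 →
      Nb r (K τ) ∩ Nb r (D s) ⊆ Nb r ∅ := by
    rw [eventually_all]; intro s
    rw [eventually_all]; intro t
    by_cases h : s.1 ⊆ t.1
    · exact Eventually.of_forall fun _ h' => absurd h h'
    · filter_upwards [Nb_inter (D := ∅) (hK1 s) (hD1 t) (by
        rw [interior_empty, ← hJS s t h]
        exact Set.inter_subset_inter (hK3 s) (hD4 t))] with r hr _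
      exact hr
  have ev3 : ∀ᶠ r : ℝ in atTop, ∀ τ τ' : J, τ ≠ τ' →
      ∀ z ∈ Nb r (K τ) ∩ Nb r (K τ'), ∃ s, z ∈ Nb r (D s) := by
    rw [eventually_all]; intro τ
    rw [eventually_all]; intro τ'
    by_cases h : τ = τ'
    · exact Eventually.of_forall fun _ h' => absurd h h'
    · by_cases hs : ∃ s : S, τ.1 ⊆ s.1 ∧ τ'.1 ⊆ s.1
      · obtain ⟨s, h3, h4⟩ := hs
        filter_upwards [Nb_inter (hK1 τ) (hK1 τ') (hD5 s τ τ' h h3 h4)] with r hr _ z hz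
        exact ⟨s, hr hz⟩
      · have hem : V τ.1 ∩ V τ'.1 = ∅ := by
          by_contra hne
          have hne' := Set.nonempty_iff_ne_empty.2 hne
          rw [hVu] at hne'
          apply hs
          refine ⟨⟨τ.1 ∪ τ'.1, ?_, hne'⟩, Finset.subset_union_left, Finset.subset_union_right⟩
          have h5 : ¬ m + 3 ≤ (τ.1 ∪ τ'.1).card := fun h' => hne'.ne_empty (hempty _ h')
          have h6 : ¬ (τ.1 ∪ τ'.1).card ≤ m + 1 := by
            intro hle
            have h3 := τ.2.1
            have h4 := τ'.2.1
            have e1 := Finset.eq_of_subset_of_card_le (Finset.subset_union_left (s₁ := τ.1) (s₂ := τ'.1)) (by omega)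
            have e2 := Finset.eq_of_subset_of_card_le (Finset.subset_union_right (s₁ := τ.1) (s₂ := τ'.1)) (by omega)
            exact h (Subtype.ext (e1.trans e2.symm))
          omega
        filter_upwards [Nb_inter (D := ∅) (hK1 τ) (hK1 τ') (by
          rw [interior_empty, ← hem]
          exact Set.inter_subset_inter (hK3 τ) (hK3 τ'))] with r hr _ z hz
        obtain ⟨x, hx, -⟩ := hr hz
        exact absurd hx (Set.notMem_empty _)
  obtain ⟨r, hr1, hr2, hr3⟩ := (ev1.and (ev2.and ev3)).exists
  have hNe : ∀ z, z ∉ Nb r ∅ := by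
    rintro z ⟨x, hx, -⟩
    exact hx
  refine grid_bound (fun (τ : J) (s : S) => τ.1 ⊆ s.1)
    (fun s => (Nb_finite r (hD1 s)).toFinset) (fun τ => (Nb_finite r (hK1 τ)).toFinset)
    ?_ ?_ ?_ ?_ ?_ ?_ ?_ ?_
  · intro s
    simpa only [Set.Finite.coe_toFinset, Set.Finite.mem_toFinset] using Nb_conn r (hD2 s)
  · intro τ
    simpa only [Set.Finite.coe_toFinset, Set.Finite.mem_toFinset] using Nb_conn r (hK2 τ)
  · intro s t z
    simp only [Set.Finite.mem_toFinset]
    intro hz hz'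
    by_contra hne
    exact hNe z (hr1 s t hne ⟨hz, hz'⟩)
  · intro τ s hτs
    simp only [Set.Finite.mem_toFinset]
    exact ⟨_, Nb_mem_floor r (hK4 τ s hτs), Nb_mem_floor r (hD3 s)⟩
  · intro τ s z
    simp only [Set.Finite.mem_toFinset]
    intro hz hz'
    by_contra hne
    exact hNe z (hr2 τ s hne ⟨hz, hz'⟩)
  · intro τ τ' z hne
    simp only [Set.Finite.mem_toFinset]
    intro hz hz'
    exact hr3 τ τ' hne z ⟨hz, hz'⟩
  · intro τ
    obtain ⟨s, -, -, hs, -⟩ := τ.2.2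
    exact ⟨s, hs⟩
  · intro s t τ τ' hst h1 h3 h4 h5
    have hlt : (s.1 ∩ t.1).card ≤ m + 1 := by
      by_contra hlt
      have e1 := Finset.eq_of_subset_of_card_le (Finset.inter_subset_left (s₁ := s.1) (s₂ := t.1)) (by have := s.2.1; omega)
      have e2 := Finset.eq_of_subset_of_card_le (Finset.inter_subset_right (s₁ := s.1) (s₂ := t.1)) (by have := t.2.1; omega)
      exact hst (Subtype.ext (e1.symm.trans e2))
    have e1 := Finset.eq_of_subset_of_card_le (Finset.subset_inter h1 h3) (by have := τ.2.1; omega)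
    have e2 := Finset.eq_of_subset_of_card_le (Finset.subset_inter h4 h5) (by have := τ'.2.1; omega)
    exact Subtype.ext (e1.trans e2.symm)

open Classical in
/-- double counting -/
theorem count (m n : ℕ) (P : Finset (Fin n) → Prop)
    (h : ∑ τ : Jg m n P,
      Nat.card {s : Sg m n P // τ.1 ⊆ s.1}
    ≤ 3 * Nat.card (Sg m n P)
      + Nat.card (Jg m n P)) :
    (m + 2) * Nat.card (Sg m n P) ≤
      3 * Nat.card (Sg m n P) +
      Nat.card {τ : Finset (Fin n) // τ.card = m + 1 ∧ ∃ s : Sg m n P, τ ⊆ s.1} := by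
  let S := Sg m n P
  let d : Finset (Fin n) → ℕ := fun τ => Nat.card {s : S // τ ⊆ s.1}
  let good : Finset (Fin n) → Prop := fun τ => ∃ s t : S, s ≠ t ∧ τ ⊆ s.1 ∧ τ ⊆ t.1
  let M : Finset (Finset (Fin n)) := Finset.univ.filter fun τ => τ.card = m + 1
  have e1 : ∑ τ : {τ : Finset (Fin n) // τ.card = m + 1 ∧ good τ}, d τ.1 =
      ∑ τ ∈ M.filter good, d τ :=
    (Finset.sum_subtype (M.filter good) (by intro x; simp [M]) d).symm
  have e2 : Nat.card {τ : Finset (Fin n) // τ.card = m + 1 ∧ good τ} = (M.filter good).card := by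
    rw [Nat.card_eq_fintype_card]
    exact Fintype.card_of_subtype _ (by intro x; simp [M])
  have e3 : Nat.card {τ : Finset (Fin n) // τ.card = m + 1 ∧ ∃ s : S, τ ⊆ s.1} =
      (M.filter fun τ => ∃ s : S, τ ⊆ s.1).card := by
    rw [Nat.card_eq_fintype_card]
    exact Fintype.card_of_subtype _ (by intro x; simp [M])
  have e4 : ∑ τ ∈ M, d τ = (m + 2) * Nat.card S := by
    have : ∀ τ, d τ = ∑ s : S, if τ ⊆ s.1 then 1 else 0 := by
      intro τ
      simp only [d, Nat.card_eq_fintype_card, Fintype.card_subtype, Finset.card_filter]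
    simp only [this]
    rw [Finset.sum_comm]
    have h5 : ∀ s : S, ∑ τ ∈ M, (if τ ⊆ s.1 then 1 else 0) = m + 2 := by
      intro s
      rw [← Finset.card_filter]
      have : M.filter (fun τ => τ ⊆ s.1) = Finset.powersetCard (m + 1) s.1 := by
        ext τ
        simp [M, Finset.mem_powersetCard, and_comm]
      rw [this, Finset.card_powersetCard, s.2.1]
      simp
    simp only [h5]
    simp [mul_comm]
  clear_value M
  have e5 : ∑ τ ∈ M, d τ ≤ ∑ τ ∈ M.filter good, d τ +
      (M.filter fun τ => (∃ s : S, τ ⊆ s.1) ∧ ¬ good τ).card := by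
    rw [← Finset.sum_filter_add_sum_filter_not M good]
    refine Nat.add_le_add_left ?_ _
    have : (M.filter fun τ => (∃ s : S, τ ⊆ s.1) ∧ ¬ good τ).card =
        ∑ τ ∈ M.filter (fun τ => ¬ good τ), if ∃ s : S, τ ⊆ s.1 then 1 else 0 := by
      rw [← Finset.card_filter, Finset.filter_filter]
      congr 1
      ext τ
      simp only [Finset.mem_filter]
      tauto
    rw [this]
    refine Finset.sum_le_sum fun τ hτ => ?_
    have hng := (Finset.mem_filter.1 hτ).2
    have hsub : Subsingleton {s : S // τ ⊆ s.1} := by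
      constructor
      rintro ⟨s, hs⟩ ⟨t, ht⟩
      by_contra hne
      exact hng ⟨s, t, fun h => hne (Subtype.ext h), hs, ht⟩
    split_ifs with hex
    · exact Finite.card_le_one_iff_subsingleton.2 hsub
    · have : IsEmpty {s : S // τ ⊆ s.1} := ⟨fun s => hex ⟨s.1, s.2⟩⟩
      simp [d]
  have e6 : (M.filter good).card + (M.filter fun τ => (∃ s : S, τ ⊆ s.1) ∧ ¬ good τ).card =
      (M.filter fun τ => ∃ s : S, τ ⊆ s.1).card := by
    rw [← Finset.card_filter_add_card_filter_not (s := M.filter fun τ => ∃ s : S, τ ⊆ s.1) good,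
      Finset.filter_filter, Finset.filter_filter]
    congr 2
    refine Finset.filter_congr fun τ _ => ⟨fun h => ⟨?_, h⟩, fun h => h.2⟩
    obtain ⟨s, t, _, hs, _⟩ := h
    exact ⟨s, hs⟩
  have h' : ∑ τ ∈ M.filter good, d τ ≤ 3 * Nat.card S + (M.filter good).card := by
    rw [← e1, ← e2]; exact h
  change (m + 2) * Nat.card S ≤ 3 * Nat.card S +
    Nat.card {τ : Finset (Fin n) // τ.card = m + 1 ∧ ∃ s : S, τ ⊆ s.1}
  rw [e3]
  omega

end PlanarUB

/-- **Theorem (weak bound for k ≥ 3).** Let `k ≥ 3` and let `𝒜 = {A_1, …, A_n}` be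
subsets of `ℝ²` such that (i) `f_{k+1}(𝒜) = 0` and (ii) each `k`-wise and `(k+1)`-wise
intersection is empty, a single point, or both open and path-connected. Then
`f_k(𝒜) ≤ (1/(k-2)) · f_{k-1}^{ind}(𝒜)`. -/
theorem planar_upper_bound_path_connected_weak (k n : ℕ) (hk : 3 ≤ k)
    (A : Fin n → Set (EuclideanSpace ℝ (Fin 2)))
    (h1 : fNum A (k + 1) = 0)
    (h2 : ∀ σ : Finset (Fin n), σ.card = k ∨ σ.card = k + 1 →
      (⋂ i ∈ σ, A i) = ∅ ∨ (∃ p, (⋂ i ∈ σ, A i) = {p}) ∨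
        (IsOpen (⋂ i ∈ σ, A i) ∧ IsPathConnected (⋂ i ∈ σ, A i))) :
    (fNum A k : ℝ) ≤ (1 / ((k : ℝ) - 2)) * fInd A (k - 1) := by
  obtain ⟨m, rfl⟩ : ∃ m, k = m + 1 := ⟨k - 1, by omega⟩
  have hmono : ∀ s t : Finset (Fin n), s ⊆ t → (⋂ i ∈ t, A i).Nonempty →
      (⋂ i ∈ s, A i).Nonempty := by
    intro s t hst hn
    exact hn.mono (Set.biInter_subset_biInter_left hst)
  have hempty : ∀ σ : Finset (Fin n), m + 3 ≤ σ.card → (⋂ i ∈ σ, A i) = ∅ := by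
    intro σ hσ
    by_contra hne
    obtain ⟨τ, hτ, hc⟩ := Finset.exists_subset_card_eq hσ
    have hn := hmono τ σ hτ (Set.nonempty_iff_ne_empty.2 hne)
    unfold fNum at h1
    have : IsEmpty {σ : Finset (Fin n) // σ.card = m + 1 + 1 + 1 ∧ (⋂ i ∈ σ, A i).Nonempty} :=
      Finite.card_eq_zero_iff.1 h1
    exact this.false ⟨τ, hc, hn⟩
  have hc := PlanarUB.count m n _ (PlanarUB.core m n A hempty h2)
  have hle : Nat.card {τ : Finset (Fin n) // τ.card = m + 1 ∧
      ∃ s : PlanarUB.Sg m n (fun σ => (⋂ i ∈ σ, A i).Nonempty), τ ⊆ s.1} ≤ fInd A m := by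
    unfold fInd
    refine Nat.card_le_card_of_injective
      (fun τ => ⟨τ.1, τ.2.1, ?_, ?_⟩) ?_
    · obtain ⟨s, hs⟩ := τ.2.2
      exact hmono _ _ hs s.2.2
    · obtain ⟨s, hs⟩ := τ.2.2
      refine ⟨s.1, Finset.ssubset_iff_subset_ne.2 ⟨hs, fun h => ?_⟩, s.2.1, s.2.2⟩
      have a1 := τ.2.1
      have a2 := s.2.1
      rw [h] at a1
      omega
    · intro a b hab
      exact Subtype.ext (congrArg (fun x => x.1) hab)
  have hf : fNum A (m + 1) =
      Nat.card (PlanarUB.Sg m n (fun σ => (⋂ i ∈ σ, A i).Nonempty)) := rfl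
  rw [← hf] at hc
  have hfin : (m + 2) * fNum A (m + 1) ≤ 3 * fNum A (m + 1) + fInd A m :=
    hc.trans (Nat.add_le_add_left hle _)
  have hR : ((m : ℝ) + 2) * fNum A (m + 1) ≤ 3 * fNum A (m + 1) + fInd A m := by
    exact_mod_cast hfin
  have hm : (2 : ℝ) ≤ m := by exact_mod_cast (by omega : 2 ≤ m)
  rw [Nat.add_sub_cancel, one_div, ← div_eq_inv_mul, le_div_iff₀ (by push_cast; linarith)]
  push_cast
  linarith
end

section
/- Let t ≥ 3 be an integer and let G be a simple planar graph with at least t+1 edges. Let H be the subgraph of G induced by the triangles of G, i.e., H consists of all edges of G that lie in some triangle (3-cycle) of G. Assume H can be written as a union H = ⋃_i H_i of subgraphs such that every triangle of G is contained in some H_i, the H_i are pairwise edge-disjoint, and every H_i has at least 3 and at most t edges. Then the number e(G) of edges and the number v(G) of vertices of G satisfy e(G) ≤ (12t/(4t+3)) · (v(G) − 2). -/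
/-- A crossing-free drawing of the graph `G` inside the subset `S` of the topological
space `X`: vertices are mapped to pairwise distinct points, every edge is realized by
an arc (the image of an injective path) between the points of its endpoints, all arcs
lie in `S`, arcs meet the vertex points only at their own endpoints, and interiors of
arcs of distinct edges are pairwise disjoint. -/
def IsCrossingFreeDrawingIn {V X : Type*} [TopologicalSpace X] (G : SimpleGraph V)
    (f : V → X) (arc : Sym2 V → Set X) (S : Set X) : Prop :=
  Function.Injective f ∧
  (∀ u v : V, G.Adj u v →
    ∃ γ : Path (f u) (f v), Function.Injective ⇑γ ∧ Set.range ⇑γ = arc s(u, v)) ∧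
  (∀ e ∈ G.edgeSet, arc e ⊆ S) ∧
  (∀ e ∈ G.edgeSet, ∀ w : V, f w ∈ arc e → w ∈ e) ∧
  (∀ e ∈ G.edgeSet, ∀ e' ∈ G.edgeSet, e ≠ e' →
    (arc e \ f '' {x | x ∈ e}) ∩ (arc e' \ f '' {x | x ∈ e'}) = ∅)

/-- A graph is planar if it admits a crossing-free drawing in `ℝ²`. -/
def IsPlanar {V : Type*} (G : SimpleGraph V) : Prop :=
  ∃ (f : V → EuclideanSpace ℝ (Fin 2)) (arc : Sym2 V → Set (EuclideanSpace ℝ (Fin 2))),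
    IsCrossingFreeDrawingIn G f arc Set.univ

open Classical in
/-- even edge-functions -/
def PEvenZ {V E : Type*} [Fintype E] (en : E → Sym2 V) (z : E → ZMod 2) : Prop :=
  ∀ v : V, ∑ e : E, (if v ∈ en e then z e else 0) = 0

/-- abstract dual -/
def PIsDual {V E F : Type*} [Fintype E] (en : E → Sym2 V) (l r : E → F) : Prop :=
  (∀ x : F → ZMod 2, PEvenZ en (fun e => x (l e) + x (r e))) ∧
  (∀ z : E → ZMod 2, PEvenZ en z → ∃ x : F → ZMod 2, ∀ e, z e = x (l e) + x (r e))

theorem zmod2_add_self (a : ZMod 2) : a + a = 0 := CharTwo.add_self_eq_zero a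

open Classical in
theorem p_euler {V E : Type*} [Fintype V] [Nonempty V] [Fintype E] (en : E → Sym2 V)
    (hd : ∀ e, ¬ (en e).IsDiag) {n : ℕ} (hn : 0 < n) (l r : E → Fin n)
    (hdual : PIsDual en l r) : Fintype.card E + 2 ≤ Fintype.card V + n := by
  let bd : (E → ZMod 2) →ₗ[ZMod 2] (V → ZMod 2) :=
    { toFun := fun z v => ∑ e : E, (if v ∈ en e then z e else 0)
      map_add' := by
        intro x y; funext v
        simp only [Pi.add_apply, ← Finset.sum_add_distrib]
        refine Finset.sum_congr rfl fun e _ => ?_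
        split_ifs <;> simp
      map_smul' := by
        intro c x; funext v
        simp only [Pi.smul_apply, smul_eq_mul, RingHom.id_apply, Finset.mul_sum]
        refine Finset.sum_congr rfl fun e _ => ?_
        split_ifs <;> simp }
  let sg : (V → ZMod 2) →ₗ[ZMod 2] ZMod 2 :=
    { toFun := fun y => ∑ v, y v
      map_add' := by intro x y; simp [Finset.sum_add_distrib]
      map_smul' := by intro c x; simp [Finset.mul_sum] }
  let B : (Fin n → ZMod 2) →ₗ[ZMod 2] (E → ZMod 2) :=
    { toFun := fun x e => x (l e) + x (r e)
      map_add' := by intro x y; funext e; simp only [Pi.add_apply]; ring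
      map_smul' := by intro c x; funext e; simp only [Pi.smul_apply, smul_eq_mul, RingHom.id_apply]; ring }
  have h1 : LinearMap.range bd ≤ LinearMap.ker sg := by
    rintro _ ⟨z, rfl⟩
    rw [LinearMap.mem_ker]
    show ∑ v, ∑ e : E, (if v ∈ en e then z e else 0) = 0
    rw [Finset.sum_comm]
    refine Finset.sum_eq_zero fun e _ => ?_
    have := hd e
    induction h : en e with
    | _ a b =>
      rw [h] at this
      simp only [Sym2.mk_isDiag_iff] at this
      have h2 : ∀ v, (if v ∈ s(a, b) then z e else 0) =
          (if v = a then z e else 0) + (if v = b then z e else 0) := by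
        intro v
        by_cases ha : v = a
        · subst ha; simp [this]
        · by_cases hb : v = b
          · subst hb; simp [ha]
          · simp [ha, hb]
      simp only [h2, Finset.sum_add_distrib]
      simp [zmod2_add_self]
  have h2 : LinearMap.ker bd ≤ LinearMap.range B := by
    intro z hz
    rw [LinearMap.mem_ker] at hz
    obtain ⟨x, hx⟩ := hdual.2 z (fun v => congrFun hz v)
    exact ⟨x, by funext e; exact (hx e).symm⟩
  have h3 : LinearMap.range sg = ⊤ := by
    rw [LinearMap.range_eq_top]
    intro c
    obtain ⟨v⟩ := ‹Nonempty V›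
    refine ⟨Pi.single v c, ?_⟩
    show ∑ w, (Pi.single v c : V → ZMod 2) w = c
    simp
  have h4 : 0 < Module.finrank (ZMod 2) (LinearMap.ker B) := by
    rw [Module.finrank_pos_iff]
    refine ⟨⟨⟨fun _ => 1, ?_⟩, 0, ?_⟩⟩
    · rw [LinearMap.mem_ker]; funext e; exact zmod2_add_self 1
    · intro h
      have := congrFun (congrArg Subtype.val h) ⟨0, hn⟩
      exact one_ne_zero this
  have r1 := LinearMap.finrank_range_add_finrank_ker bd
  have r2 := LinearMap.finrank_range_add_finrank_ker sg
  have r3 := LinearMap.finrank_range_add_finrank_ker B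
  have r4 := Submodule.finrank_mono h1
  have r5 := Submodule.finrank_mono h2
  rw [h3, finrank_top] at r2
  simp only [Module.finrank_fintype_fun_eq_card, Module.finrank_self, Fintype.card_fin] at r1 r2 r3
  omega

open Classical in
theorem p_even_other {V E : Type*} [Fintype E] (en : E → Sym2 V)
    (D : Finset E) (hD : PEvenZ en (fun e => if e ∈ D then 1 else 0))
    {e : E} (he : e ∈ D) {v : V} (hv : v ∈ en e) : ∃ e' ∈ D, e' ≠ e ∧ v ∈ en e' := by
  by_contra hcon
  push Not at hcon
  have := hD v
  rw [Finset.sum_eq_single e] at this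
  · simp [hv, he] at this
  · intro e' _ hne
    by_cases h : e' ∈ D
    · simp [hcon e' h hne]
    · simp [h]
  · simp

open Classical in
theorem p_even_three {V E : Type*} [Fintype E] (en : E → Sym2 V)
    (hinj : Function.Injective en) (hd : ∀ e, ¬ (en e).IsDiag)
    (D : Finset E) (hD : PEvenZ en (fun e => if e ∈ D then 1 else 0)) (hne : D.Nonempty) :
    3 ≤ D.card ∧ (D.card = 3 → ∃ u v w : V, ∃ e1 e2 e3 : E, en e1 = s(u, v) ∧ en e2 = s(v, w) ∧
      en e3 = s(u, w) ∧ D = {e1, e2, e3}) := by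
  obtain ⟨e1, he1⟩ := hne
  obtain ⟨u, v, h1⟩ : ∃ u v, en e1 = s(u, v) := by
    induction h : en e1 with | _ a b => exact ⟨a, b, rfl⟩
  have huv : u ≠ v := by have := hd e1; rw [h1] at this; simpa using this
  obtain ⟨e2, he2, hne2, hv2⟩ := p_even_other en D hD he1 (v := v) (by simp [h1])
  obtain ⟨e3, he3, hne3, hu3⟩ := p_even_other en D hD he1 (v := u) (by simp [h1])
  obtain ⟨w, h2⟩ := Sym2.mem_iff_exists.1 hv2
  obtain ⟨x, h3⟩ := Sym2.mem_iff_exists.1 hu3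
  have hvw : v ≠ w := by have := hd e2; rw [h2] at this; simpa using this
  have hux : u ≠ x := by have := hd e3; rw [h3] at this; simpa using this
  have hwu : w ≠ u := by
    rintro rfl; exact hne2 (hinj (by rw [h1, h2, Sym2.eq_swap]))
  have h23 : e2 ≠ e3 := by
    rintro rfl
    rw [h2] at h3
    simp [huv.symm, hwu] at h3
  have hsub : ({e1, e2, e3} : Finset E) ⊆ D := by
    intro e; simp only [Finset.mem_insert, Finset.mem_singleton]; rintro (rfl | rfl | rfl) <;> assumption
  have hc : ({e1, e2, e3} : Finset E).card = 3 := Finset.card_eq_three.2 ⟨e1, e2, e3, hne2.symm, hne3.symm, h23, rfl⟩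
  refine ⟨hc ▸ Finset.card_le_card hsub, fun h => ?_⟩
  have hDe : {e1, e2, e3} = D := Finset.eq_of_subset_of_card_le hsub (by omega)
  obtain ⟨e4, he4, hne4, hw4⟩ := p_even_other en D hD he2 (v := w) (by simp [h2])
  rw [← hDe] at he4
  simp only [Finset.mem_insert, Finset.mem_singleton] at he4
  have hwx : w = x := by
    rcases he4 with rfl | rfl | rfl
    · rw [h1] at hw4; simp [hwu, hvw.symm] at hw4
    · exact absurd rfl hne4
    · rw [h3] at hw4; simpa [hwu] using hw4
  subst hwx
  exact ⟨u, v, w, e1, e2, e3, h1, h2, h3, hDe.symm⟩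

/-- connected abstract dual -/
def PDualConn {E : Type*} {n : ℕ} (l r : E → Fin n) : Prop :=
  ∀ S : Finset (Fin n), (∀ e, l e ∈ S ↔ r e ∈ S) → S = ∅ ∨ S = Finset.univ

open Classical in
theorem p_exists_conn {V E F : Type*} [Fintype E] [Finite F] (en : E → Sym2 V) (l r : E → F)
    (hdual : PIsDual en l r) :
    ∃ n, ∃ l' r' : E → Fin n, PIsDual en l' r' ∧ PDualConn l' r' := by
  have htrans : ∀ {F' F'' : Type _} (l r : E → F') (_ : PIsDual en l r) (φ : F' ≃ F''),
      PIsDual en (fun e => φ (l e)) (fun e => φ (r e)) := by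
    intro F' F'' l r h φ
    refine ⟨fun x => h.1 (fun y => x (φ y)), fun z hz => ?_⟩
    obtain ⟨x, hx⟩ := h.2 z hz
    exact ⟨fun y => x (φ.symm y), fun e => by simpa using hx e⟩
  have hex : ∃ n, ∃ l' r' : E → Fin n, PIsDual en l' r' := by
    obtain ⟨n, ⟨φ⟩⟩ := Finite.exists_equiv_fin F
    refine ⟨n, fun e => φ (l e), fun e => φ (r e), fun x => hdual.1 (fun y => x (φ y)), fun z hz => ?_⟩
    obtain ⟨x, hx⟩ := hdual.2 z hz
    exact ⟨fun y => x (φ.symm y), fun e => by simpa using hx e⟩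
  obtain ⟨l', r', h'⟩ := Nat.find_spec hex
  have hmin := fun m => @Nat.find_min _ _ hex m
  generalize Nat.find hex = n at *
  refine ⟨n, l', r', h', ?_⟩
  intro S hS
  by_contra hcon
  push Not at hcon
  obtain ⟨a, ha⟩ := hcon.1
  obtain ⟨b, hb⟩ : ∃ b, b ∉ S := by
    by_contra hall; push Not at hall
    exact hcon.2 (Finset.eq_univ_iff_forall.2 hall)
  have hab : b ≠ a := by rintro rfl; exact hb ha
  let π : Fin n → {y : Fin n // y ≠ a} := fun y => if h : y = a then ⟨b, hab⟩ else ⟨y, h⟩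
  have hd2 : PIsDual en (fun e => π (l' e)) (fun e => π (r' e)) := by
    refine ⟨fun x => h'.1 (fun y => x (π y)), fun z hz => ?_⟩
    obtain ⟨x, hx⟩ := h'.2 z hz
    let x' : Fin n → ZMod 2 := fun y => x y + if y ∈ S then x a + x b else 0
    have hx' : ∀ e, z e = x' (l' e) + x' (r' e) := by
      intro e
      simp only [x', hS e]
      rw [hx e]
      split_ifs
      · linear_combination -(zmod2_add_self (x a + x b))
      · ring
    have hπ : ∀ y, x' (π y).1 = x' y := by
      intro y
      by_cases h : y = a
      · subst h
        simp only [π, dif_pos, x', if_pos ha, if_neg hb]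
        linear_combination -(zmod2_add_self (x y))
      · simp [π, h]
    exact ⟨fun y => x' y.1, fun e => by simp only [hπ]; exact hx' e⟩
  have hcard : Nat.card {y : Fin n // y ≠ a} = n - 1 := by
    simp [Fintype.card_subtype_compl]
  have hpos : 0 < n := a.pos
  let φ := Finite.equivFinOfCardEq hcard
  exact hmin (n - 1) (by omega) ⟨_, _, htrans _ _ hd2 φ⟩

open Classical in
/-- edges separating `S` from its complement -/
noncomputable def pB {E : Type*} [Fintype E] {n : ℕ} (l r : E → Fin n) (S : Finset (Fin n)) : Finset E :=
  Finset.univ.filter (fun e => ¬ (l e ∈ S ↔ r e ∈ S))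

open Classical in
theorem p_double {E : Type*} [Fintype E] {n : ℕ} (l r : E → Fin n) (S : Finset (Fin n))
    (A : Finset E) (hA : ∀ F ∈ S, pB l r {F} ⊆ A) :
    ∑ F ∈ S, (pB l r {F}).card + (pB l r S).card ≤ 2 * A.card := by
  have h1 : ∀ F ∈ S, (pB l r {F}).card = ∑ e ∈ A, if e ∈ pB l r {F} then 1 else 0 := by
    intro F hF
    rw [Finset.sum_ite_mem, Finset.inter_eq_right.2 (hA F hF)]; simp
  have hBS : pB l r S ⊆ A := by
    intro e he
    simp only [pB, Finset.mem_filter, Finset.mem_univ, true_and] at he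
    by_cases hl : l e ∈ S
    · apply hA _ hl
      have hr : r e ∉ S := fun h => he ⟨fun _ => h, fun _ => hl⟩
      simp only [pB, Finset.mem_filter, Finset.mem_univ, true_and, Finset.mem_singleton]
      intro h; exact hr (h.1 trivial ▸ hl)
    · have hr : r e ∈ S := by tauto
      apply hA _ hr
      simp only [pB, Finset.mem_filter, Finset.mem_univ, true_and, Finset.mem_singleton]
      intro h; exact hl (h.2 trivial ▸ hr)
  have h2 : (pB l r S).card = ∑ e ∈ A, if e ∈ pB l r S then 1 else 0 := by
    rw [Finset.sum_ite_mem, Finset.inter_eq_right.2 hBS]; simp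
  rw [Finset.sum_congr rfl h1, h2, Finset.sum_comm, ← Finset.sum_add_distrib, mul_comm,
    ← smul_eq_mul, ← Finset.sum_const]
  refine Finset.sum_le_sum fun e _ => ?_
  rw [← Finset.sum_filter, Finset.sum_const, smul_eq_mul, mul_one]
  have hsub : (S.filter (fun F => e ∈ pB l r {F})) ⊆ S ∩ {l e, r e} := by
    intro F hF
    simp only [pB, Finset.mem_filter, Finset.mem_univ, true_and, Finset.mem_singleton,
      Finset.mem_inter, Finset.mem_insert] at hF ⊢
    refine ⟨hF.1, ?_⟩
    by_contra hcon
    push Not at hcon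
    exact hF.2 ⟨fun h => absurd h.symm hcon.1, fun h => absurd h.symm hcon.2⟩
  have hc := Finset.card_le_card hsub
  split_ifs with he
  · have : (S ∩ {l e, r e}).card ≤ 1 := by
      rw [Finset.card_le_one]
      simp only [pB, Finset.mem_filter, Finset.mem_univ, true_and] at he
      intro a ha b hb
      simp only [Finset.mem_inter, Finset.mem_insert, Finset.mem_singleton] at ha hb
      rcases ha with ⟨ha, rfl | rfl⟩ <;> rcases hb with ⟨hb, rfl | rfl⟩ <;> tauto
    omega
  · have : (S ∩ {l e, r e}).card ≤ 2 :=
      (Finset.card_le_card Finset.inter_subset_right).trans Finset.card_le_two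
    omega

open Classical in
theorem p_count {E ι : Type*} [Fintype E] {n t : ℕ} (ht : 3 ≤ t) (hn : 2 ≤ n)
    (hE : t + 1 ≤ Fintype.card E) (l r : E → Fin n)
    (h3 : ∀ S : Finset (Fin n), S ≠ ∅ → S ≠ Finset.univ → 3 ≤ (pB l r S).card)
    (idx : Fin n → ι) (A : ι → Finset E) (hdisj : ∀ i j, i ≠ j → Disjoint (A i) (A j))
    (hA : ∀ i, (A i).card ≤ t)
    (hidx : ∀ F, (pB l r {F}).card = 3 → pB l r {F} ⊆ A (idx F)) :
    12 * t * n + (4 * t + 3) * Fintype.card E ≤ 12 * t * Fintype.card E := by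
  have hF : ∀ F : Fin n, 3 ≤ (pB l r {F}).card := by
    intro F
    refine h3 _ (Finset.singleton_ne_empty F) fun h => ?_
    have := congrArg Finset.card h
    simp at this; omega
  set T : Finset (Fin n) := Finset.univ.filter (fun F => (pB l r {F}).card = 3) with hT
  let I := T.image idx
  let Si : ι → Finset (Fin n) := fun i => T.filter (fun F => idx F = i)
  have hSi : ∀ i, ∀ F ∈ Si i, pB l r {F} ⊆ A i := by
    intro i F hF
    simp only [Si, hT, Finset.mem_filter, Finset.mem_univ, true_and] at hF
    rw [← hF.2]; exact hidx F hF.1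
  have hsum : ∀ i, ∑ F ∈ Si i, (pB l r {F}).card = 3 * (Si i).card := by
    intro i
    rw [Finset.sum_const_nat (m := 3), mul_comm]
    intro F hF
    simp only [Si, hT, Finset.mem_filter, Finset.mem_univ, true_and] at hF
    exact hF.1
  by_cases hall : ∃ i, Si i = Finset.univ
  · obtain ⟨i, hi⟩ := hall
    have h := p_double l r (Si i) (A i) (hSi i)
    rw [hsum, hi, Finset.card_univ, Fintype.card_fin] at h
    have := hA i
    have h5 : 3 * n ≤ 2 * t := by omega
    nlinarith
  · push Not at hall
    have hI : ∀ i ∈ I, 3 * (Si i).card + 3 ≤ 2 * (A i).card := by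
      intro i hi
      have h := p_double l r (Si i) (A i) (hSi i)
      rw [hsum] at h
      have hne : Si i ≠ ∅ := by
        simp only [I, Finset.mem_image] at hi
        obtain ⟨F, hF, rfl⟩ := hi
        exact Finset.ne_empty_of_mem (a := F) (by simp [Si, hF])
      have := h3 _ hne (hall i)
      omega
    have hTc : T.card = ∑ i ∈ I, (Si i).card := Finset.card_eq_sum_card_image idx T
    have hU : ∑ i ∈ I, (A i).card ≤ Fintype.card E := by
      rw [← Finset.card_biUnion (fun i _ j _ hij => hdisj i j hij)]
      exact Finset.card_le_univ _
    have hT3 : 3 * t * T.card + 3 * Fintype.card E ≤ 2 * t * Fintype.card E := by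
      have : ∑ i ∈ I, (3 * t * (Si i).card + 3 * (A i).card) ≤ ∑ i ∈ I, (2 * t * (A i).card) := by
        refine Finset.sum_le_sum fun i hi => ?_
        have a1 := hI i hi
        have a2 := hA i
        nlinarith
      rw [Finset.sum_add_distrib, ← Finset.mul_sum, ← Finset.mul_sum, ← Finset.mul_sum, ← hTc] at this
      nlinarith
    have h4 : 4 * n ≤ 2 * Fintype.card E + T.card := by
      have h := p_double l r Finset.univ Finset.univ (fun _ _ => Finset.subset_univ _)
      have h5 : ∑ F : Fin n, 4 ≤ ∑ F : Fin n, ((pB l r {F}).card + if (pB l r {F}).card = 3 then 1 else 0) := by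
        refine Finset.sum_le_sum fun F _ => ?_
        have := hF F
        split_ifs <;> omega
      rw [Finset.sum_add_distrib, ← Finset.card_filter, ← hT] at h5
      simp only [Finset.sum_const, Finset.card_univ, Fintype.card_fin, smul_eq_mul] at h5 h
      omega
    nlinarith

open Classical in
theorem p_final {V E ι : Type*} [Nonempty ι] [Fintype V] [Fintype E] (en : E → Sym2 V)
    (hinj : Function.Injective en) (hd : ∀ e, ¬ (en e).IsDiag)
    {F : Type*} [Finite F] (l0 r0 : E → F) (hdual0 : PIsDual en l0 r0) {t : ℕ} (ht : 3 ≤ t)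
    (hE : t + 1 ≤ Fintype.card E)
    (A : ι → Finset E) (hdisj : ∀ i j, i ≠ j → Disjoint (A i) (A j))
    (hA : ∀ i, (A i).card ≤ t)
    (htri : ∀ u v w : V, ∀ e1 e2 e3 : E, en e1 = s(u, v) → en e2 = s(v, w) → en e3 = s(u, w) →
      ∃ i, e1 ∈ A i ∧ e2 ∈ A i ∧ e3 ∈ A i) :
    (4 * t + 3) * Fintype.card E + 24 * t ≤ 12 * t * Fintype.card V := by
  obtain ⟨n, l, r, hdual, hconn⟩ := p_exists_conn en l0 r0 hdual0
  obtain ⟨e0⟩ : Nonempty E := Fintype.card_pos_iff.1 (by omega)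
  have hn0 : 0 < n := (l e0).pos
  obtain ⟨v0⟩ : Nonempty V := by
    induction h : en e0 with | _ a b => exact ⟨a⟩
  have : Nonempty V := ⟨v0⟩
  have heu := p_euler en hd hn0 l r hdual
  have heven : ∀ S : Finset (Fin n), PEvenZ en (fun e => if e ∈ pB l r S then 1 else 0) := by
    intro S
    have := hdual.1 (fun y => if y ∈ S then 1 else 0)
    convert this using 2 with e
    simp only [pB, Finset.mem_filter, Finset.mem_univ, true_and]
    by_cases h1 : l e ∈ S <;> by_cases h2 : r e ∈ S <;> simp [h1, h2, zmod2_add_self]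
  have h3 : ∀ S : Finset (Fin n), S ≠ ∅ → S ≠ Finset.univ → (pB l r S).Nonempty := by
    intro S h1 h2
    rw [Finset.nonempty_iff_ne_empty]
    intro h
    have : ∀ e, l e ∈ S ↔ r e ∈ S := by
      intro e
      by_contra hc
      have : e ∈ pB l r S := by simp [pB, hc]
      rw [h] at this; simp at this
    rcases hconn S this with h | h
    · exact h1 h
    · exact h2 h
  rcases Nat.lt_or_ge n 2 with hn | hn
  · have : n = 1 := by omega
    subst this
    nlinarith
  · have hidx : ∀ F, ∃ i, (pB l r {F}).card = 3 → pB l r {F} ⊆ A i := by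
      intro F
      have hne : (pB l r {F}).Nonempty := by
        refine h3 _ (Finset.singleton_ne_empty F) fun h => ?_
        have := congrArg Finset.card h
        simp at this; omega
      by_cases hc : (pB l r {F}).card = 3
      · obtain ⟨u, v, w, e1, e2, e3, a1, a2, a3, h⟩ := (p_even_three en hinj hd _ (heven {F}) hne).2 hc
        obtain ⟨i, b1, b2, b3⟩ := htri u v w e1 e2 e3 a1 a2 a3
        refine ⟨i, fun _ => ?_⟩
        rw [h]
        intro e; simp only [Finset.mem_insert, Finset.mem_singleton]
        rintro (rfl | rfl | rfl) <;> assumption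
      · exact ⟨Classical.arbitrary ι, fun h => absurd h hc⟩
    choose idx hidx using hidx
    have := p_count ht hn hE l r (fun S h1 h2 => (p_even_three en hinj hd _ (heven S) (h3 S h1 h2)).1)
      idx A hdisj hA hidx
    nlinarith

/-- neighbours in the square grid -/
def gnb (g : ℤ × ℤ) : Finset (ℤ × ℤ) :=
  {(g.1 + 1, g.2), (g.1 - 1, g.2), (g.1, g.2 + 1), (g.1, g.2 - 1)}

/-- first square next to a grid edge -/
def gL (g h : ℤ × ℤ) : ℤ × ℤ := (min g.1 h.1, min g.2 h.2)

/-- second square next to a grid edge -/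
def gR (g h : ℤ × ℤ) : ℤ × ℤ :=
  if g.2 = h.2 then (min g.1 h.1, g.2 - 1) else (min g.1 h.1 - 1, min g.2 h.2)

theorem gL_symm (g h : ℤ × ℤ) : gL g h = gL h g := by
  simp [gL, min_comm]

theorem gR_symm (g h : ℤ × ℤ) : gR g h = gR h g := by
  unfold gR
  by_cases hh : g.2 = h.2
  · simp [hh, min_comm]
  · simp [hh, Ne.symm hh, min_comm]

theorem gnb_symm {g h : ℤ × ℤ} : h ∈ gnb g ↔ g ∈ gnb h := by
  simp only [gnb, Finset.mem_insert, Finset.mem_singleton, Prod.ext_iff]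
  omega

theorem gnb_ne {g h : ℤ × ℤ} (hh : h ∈ gnb g) : h ≠ g := by
  simp only [gnb, Finset.mem_insert, Finset.mem_singleton, Prod.ext_iff, ne_eq] at *
  omega

theorem sum_gnb (g : ℤ × ℤ) (φ : ℤ × ℤ → ZMod 2) :
    ∑ h ∈ gnb g, φ h = φ (g.1 + 1, g.2) + (φ (g.1 - 1, g.2) + (φ (g.1, g.2 + 1) + φ (g.1, g.2 - 1))) := by
  unfold gnb
  rw [Finset.sum_insert, Finset.sum_insert, Finset.sum_insert, Finset.sum_singleton]
  all_goals
    simp only [Finset.mem_insert, Finset.mem_singleton, Prod.ext_iff]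
    omega

theorem g_right (i j : ℤ) : gL (i, j) (i + 1, j) = (i, j) ∧ gR (i, j) (i + 1, j) = (i, j - 1) := by
  simp [gL, gR]

theorem g_up (i j : ℤ) : gL (i, j) (i, j + 1) = (i, j) ∧ gR (i, j) (i, j + 1) = (i - 1, j) := by
  simp [gL, gR]

theorem g_left (i j : ℤ) : gL (i, j) (i - 1, j) = (i - 1, j) ∧ gR (i, j) (i - 1, j) = (i - 1, j - 1) := by
  simp [gL, gR]

theorem g_down (i j : ℤ) : gL (i, j) (i, j - 1) = (i, j - 1) ∧ gR (i, j) (i, j - 1) = (i - 1, j - 1) := by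
  have : j ≠ j - 1 := by omega
  simp [gL, gR, this]

theorem g_closed (x : ℤ × ℤ → ZMod 2) (g : ℤ × ℤ) :
    ∑ h ∈ gnb g, (x (gL g h) + x (gR g h)) = 0 := by
  obtain ⟨i, j⟩ := g
  rw [sum_gnb]
  simp only [g_right, g_up, g_left, g_down]
  linear_combination zmod2_add_self (x (i, j)) + zmod2_add_self (x (i, j - 1)) +
    zmod2_add_self (x (i - 1, j)) + zmod2_add_self (x (i - 1, j - 1))

theorem g_prim (c : ℤ → ZMod 2) : ∃ s : ℤ → ZMod 2, s 0 = 0 ∧ ∀ i, s i + s (i - 1) = c i := by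
  refine ⟨fun i => ∑ k ∈ Finset.Ioc 0 i, c k + ∑ k ∈ Finset.Ioc i 0, c k, by simp, fun i => ?_⟩
  rcases le_or_gt 1 i with h | h
  · have h1 : Finset.Ioc 0 i = insert i (Finset.Ioc 0 (i - 1)) := by
      ext k; simp only [Finset.mem_Ioc, Finset.mem_insert]; omega
    have h2 : Finset.Ioc i 0 = ∅ := by rw [Finset.Ioc_eq_empty_iff]; omega
    have h3 : Finset.Ioc (i - 1) 0 = ∅ := by rw [Finset.Ioc_eq_empty_iff]; omega
    simp only [h1, h2, h3]
    rw [Finset.sum_insert (by simp)]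
    simp only [Finset.sum_empty]
    linear_combination zmod2_add_self (∑ k ∈ Finset.Ioc 0 (i - 1), c k)
  · have h1 : Finset.Ioc (i - 1) 0 = insert i (Finset.Ioc i 0) := by
      ext k; simp only [Finset.mem_Ioc, Finset.mem_insert]; omega
    have h2 : Finset.Ioc 0 i = ∅ := by rw [Finset.Ioc_eq_empty_iff]; omega
    have h3 : Finset.Ioc 0 (i - 1) = ∅ := by rw [Finset.Ioc_eq_empty_iff]; omega
    simp only [h1, h2, h3]
    rw [Finset.sum_insert (by simp)]
    simp only [Finset.sum_empty]
    linear_combination zmod2_add_self (∑ k ∈ Finset.Ioc i 0, c k)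

theorem g_exact (z : ℤ × ℤ → ℤ × ℤ → ZMod 2) (hsym : ∀ g h, z g h = z h g)
    (hcl : ∀ g, ∑ h ∈ gnb g, z g h = 0) :
    ∃ x : ℤ × ℤ → ZMod 2, ∀ g, ∀ h ∈ gnb g, z g h = x (gL g h) + x (gR g h) := by
  obtain ⟨S, hS0, hS⟩ := g_prim (fun i => z (i, 0) (i, 0 + 1))
  choose T hT0 hT using fun i : ℤ => g_prim (fun j => z (i, j) (i + 1, j))
  have hA : ∀ i j, z (i, j) (i + 1, j) = (S i + T i j) + (S i + T i (j - 1)) := by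
    intro i j
    linear_combination - hT i j - zmod2_add_self (S i)
  have hstep : ∀ i j, (z (i, j) (i, j + 1) + ((S i + T i j) + (S (i - 1) + T (i - 1) j))) +
      (z (i, j - 1) (i, j) + ((S i + T i (j - 1)) + (S (i - 1) + T (i - 1) (j - 1)))) = 0 := by
    intro i j
    have := hcl (i, j)
    rw [sum_gnb] at this
    simp only at this
    have h1 := hA i j
    have h2 := hA (i - 1) j
    rw [sub_add_cancel, hsym] at h2
    rw [hsym (i, j) (i, j - 1), h1, h2] at this
    linear_combination this
  have hB : ∀ i j, z (i, j) (i, j + 1) + ((S i + T i j) + (S (i - 1) + T (i - 1) j)) = 0 := by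
    intro i j
    induction j using Int.induction_on with
    | zero =>
      rw [hT0, hT0, ← hS i]
      linear_combination zmod2_add_self (S i) + zmod2_add_self (S (i - 1))
    | succ k ih =>
      have := hstep i (k + 1)
      simp only [add_sub_cancel_right] at this
      rw [ih, add_zero] at this
      exact this
    | pred k ih =>
      have := hstep i (-k)
      rw [ih, zero_add] at this
      rw [sub_add_cancel]
      exact this
  have hB' : ∀ i j, z (i, j) (i, j + 1) = (S i + T i j) + (S (i - 1) + T (i - 1) j) := by
    intro i j
    linear_combination hB i j - zmod2_add_self ((S i + T i j) + (S (i - 1) + T (i - 1) j))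
  refine ⟨fun p => S p.1 + T p.1 p.2, ?_⟩
  rintro ⟨i, j⟩ h hh
  simp only [gnb, Finset.mem_insert, Finset.mem_singleton] at hh
  rcases hh with rfl | rfl | rfl | rfl
  · simp only [g_right]; exact hA i j
  · simp only [g_left]
    rw [hsym]
    have := hA (i - 1) j
    rw [sub_add_cancel] at this
    exact this
  · simp only [g_up]; exact hB' i j
  · simp only [g_down]
    rw [hsym]
    have := hB' i (j - 1)
    rw [sub_add_cancel] at this
    exact this

/-- connected sets of grid points -/
def GConn (X : Set (ℤ × ℤ)) : Prop :=
  ∀ P : ℤ × ℤ → Prop, (∀ g ∈ X, ∀ h ∈ X, h ∈ gnb g → (P g ↔ P h)) → ∀ g ∈ X, ∀ h ∈ X, P g → P h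

/-- indicator of an edge -/
def geb (g h a b : ℤ × ℤ) : ZMod 2 :=
  (if a = g ∧ b = h then 1 else 0) + (if a = h ∧ b = g then 1 else 0)

theorem geb_symm (g h a b : ℤ × ℤ) : geb g h a b = geb g h b a := by
  unfold geb; rw [add_comm]; simp only [and_comm]

theorem sum_geb {g h : ℤ × ℤ} (hh : h ∈ gnb g) (k : ℤ × ℤ) :
    ∑ b ∈ gnb k, geb g h k b = (if k = g then 1 else 0) + (if k = h then 1 else 0) := by
  have hh' := gnb_symm.1 hh
  unfold geb
  rw [Finset.sum_add_distrib]
  congr 1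
  · by_cases hk : k = g
    · subst hk; simp [hh]
    · simp [hk]
  · by_cases hk : k = h
    · subst hk; simp [hh']
    · simp [hk]

theorem g_tjoin (X : Finset (ℤ × ℤ)) (hX : GConn (X : Set (ℤ × ℤ))) (φ : ℤ × ℤ → ZMod 2)
    (hφ : ∑ g ∈ X, φ g = 0) :
    ∃ τ : ℤ × ℤ → ℤ × ℤ → ZMod 2, (∀ g h, τ g h = τ h g) ∧
      (∀ g h, ¬ (g ∈ X ∧ h ∈ X) → τ g h = 0) ∧ ∀ g ∈ X, ∑ h ∈ gnb g, τ g h = φ g := by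
  rcases X.eq_empty_or_nonempty with rfl | ⟨g0, hg0⟩
  · exact ⟨fun _ _ => 0, by simp, by simp, by simp⟩
  have key : ∀ g ∈ X, ∃ τ : ℤ × ℤ → ℤ × ℤ → ZMod 2, (∀ g h, τ g h = τ h g) ∧
      (∀ g h, ¬ (g ∈ X ∧ h ∈ X) → τ g h = 0) ∧
      ∀ k, ∑ h ∈ gnb k, τ k h = (if k = g then 1 else 0) + (if k = g0 then 1 else 0) := by
    intro g hg
    have step : ∀ g ∈ X, ∀ h ∈ X, h ∈ gnb g →
      (∃ τ : ℤ × ℤ → ℤ × ℤ → ZMod 2, (∀ g h, τ g h = τ h g) ∧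
      (∀ g h, ¬ (g ∈ X ∧ h ∈ X) → τ g h = 0) ∧
      ∀ k, ∑ h ∈ gnb k, τ k h = (if k = g then 1 else 0) + (if k = g0 then 1 else 0)) →
      (∃ τ : ℤ × ℤ → ℤ × ℤ → ZMod 2, (∀ g h, τ g h = τ h g) ∧
      (∀ g h, ¬ (g ∈ X ∧ h ∈ X) → τ g h = 0) ∧
      ∀ k, ∑ h ∈ gnb k, τ k h = (if k = h then 1 else 0) + (if k = g0 then 1 else 0)) := by
      rintro g hg h hh hgh ⟨τ, h1, h2, h3⟩
      refine ⟨fun a b => τ a b + geb g h a b, ?_, ?_, ?_⟩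
      · intro a b; simp only; rw [h1 a b, geb_symm]
      · intro a b hab
        simp only
        rw [h2 a b hab, zero_add, geb, if_neg, if_neg, add_zero]
        · rintro ⟨rfl, rfl⟩; exact hab ⟨hh, hg⟩
        · rintro ⟨rfl, rfl⟩; exact hab ⟨hg, hh⟩
      · intro k
        rw [Finset.sum_add_distrib, h3, sum_geb hgh]
        linear_combination zmod2_add_self (if k = g then 1 else 0)
    refine hX _ (fun g hg h hh hgh => ⟨step g hg h hh hgh, step h hh g hg (gnb_symm.1 hgh)⟩)
      g0 hg0 g hg ?_
    exact ⟨fun _ _ => 0, by simp, by simp, fun k => by simp [zmod2_add_self]⟩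
  choose! τ h1 h2 h3 using key
  refine ⟨fun a b => ∑ g ∈ X, φ g * τ g a b, ?_, ?_, ?_⟩
  · intro a b
    exact Finset.sum_congr rfl fun g hg => by rw [h1 g hg]
  · intro a b hab
    exact Finset.sum_eq_zero fun g hg => by rw [h2 g hg a b hab, mul_zero]
  · intro k hk
    rw [Finset.sum_comm]
    calc ∑ g ∈ X, ∑ h ∈ gnb k, φ g * τ g k h
        = ∑ g ∈ X, ((if k = g then φ g else 0) + φ g * (if k = g0 then 1 else 0)) := by
          refine Finset.sum_congr rfl fun g hg => ?_
          rw [← Finset.mul_sum, h3 g hg, mul_add]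
          simp
      _ = φ k := by
          rw [Finset.sum_add_distrib, ← Finset.sum_mul, hφ]
          simp [hk]

theorem g_sum_symm (X : Finset (ℤ × ℤ)) (φ : ℤ × ℤ → ℤ × ℤ → ZMod 2)
    (hs : ∀ g h, φ g h = φ h g) (h0 : ∀ g, φ g g = 0) : ∑ g ∈ X, ∑ h ∈ X, φ g h = 0 := by
  induction X using Finset.induction_on with
  | empty => simp
  | insert a s ha ih =>
    rw [Finset.sum_insert ha]
    simp only [Finset.sum_insert ha, Finset.sum_add_distrib]
    rw [ih, h0]
    simp only [fun g => hs g a]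
    linear_combination zmod2_add_self (∑ h ∈ s, φ a h)

open Classical in
theorem p_minor_dual {V E : Type*} [Fintype V] [Fintype E] (en : E → Sym2 V)
    (hinj : Function.Injective en) (X : V → Finset (ℤ × ℤ))
    (hconn : ∀ v, GConn (X v : Set (ℤ × ℤ))) (hX : ∀ g v w, g ∈ X v → g ∈ X w → v = w)
    (tl hd : E → V) (hen : ∀ e, en e = s(tl e, hd e)) (hne : ∀ e, tl e ≠ hd e)
    (a b : E → ℤ × ℤ) (ha : ∀ e, a e ∈ X (tl e)) (hb : ∀ e, b e ∈ X (hd e))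
    (hab : ∀ e, b e ∈ gnb (a e)) :
    ∃ (F : Type) (_ : Finite F) (l r : E → F), PIsDual en l r := by
  have hU : ∀ e e', geb (a e') (b e') (a e) (b e) = if e' = e then 1 else 0 := by
    intro e e'
    unfold geb
    have h2 : ¬ (a e = b e' ∧ b e = a e') := by
      rintro ⟨h1, h2⟩
      have h3 : tl e = hd e' := hX _ _ _ (ha e) (h1 ▸ hb e')
      have h4 : hd e = tl e' := hX _ _ _ (hb e) (h2 ▸ ha e')
      have : e = e' := hinj (by rw [hen, hen, h3, h4, Sym2.eq_swap])
      subst this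
      exact hne e h3
    rw [if_neg h2, add_zero]
    by_cases h : e' = e
    · subst h; simp
    · rw [if_neg h, if_neg]
      rintro ⟨h1, h2⟩
      have h3 : tl e = tl e' := hX _ _ _ (ha e) (h1 ▸ ha e')
      have h4 : hd e = hd e' := hX _ _ _ (hb e) (h2 ▸ hb e')
      exact h (hinj (by rw [hen, hen, h3, h4]))
  have hmem : ∀ e v (c : ZMod 2), (if v ∈ en e then c else 0) =
      c * ((if tl e = v then 1 else 0) + (if hd e = v then 1 else 0)) := by
    intro e v c
    rw [hen]
    by_cases h1 : tl e = v
    · have : hd e ≠ v := fun h => hne e (h1.trans h.symm)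
      simp [h1, this]
    · by_cases h2 : hd e = v
      · simp [h1, h2]
      · simp [h1, h2, Ne.symm h1, Ne.symm h2]
  have hav : ∀ e v, a e ∈ X v ↔ tl e = v := fun e v =>
    ⟨fun h => hX _ _ _ (ha e) h, fun h => h ▸ ha e⟩
  have hbv : ∀ e v, b e ∈ X v ↔ hd e = v := fun e v =>
    ⟨fun h => hX _ _ _ (hb e) h, fun h => h ▸ hb e⟩
  have hsumX : ∀ e v, ∑ g ∈ X v, ((if g = a e then (1 : ZMod 2) else 0) + (if g = b e then 1 else 0)) =
      (if tl e = v then 1 else 0) + (if hd e = v then 1 else 0) := by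
    intro e v
    rw [Finset.sum_add_distrib]
    simp [hav, hbv]
  let D : ℤ × ℤ → ℤ × ℤ → Prop := fun g h => h ∈ gnb g ∧ (∀ v, ¬ (g ∈ X v ∧ h ∈ X v)) ∧
    ∀ e, ¬ (g = a e ∧ h = b e) ∧ ¬ (g = b e ∧ h = a e)
  let Q := Quot (fun p q => ∃ g h, D g h ∧ p = gL g h ∧ q = gR g h)
  let mk : ℤ × ℤ → Q := Quot.mk _
  let Fs : Set Q := Set.range (fun e => mk (gL (a e) (b e))) ∪ Set.range (fun e => mk (gR (a e) (b e)))
  have hfin : Finite Fs := ((Set.finite_range _).union (Set.finite_range _)).to_subtype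
  refine ⟨Fs, hfin, fun e => ⟨mk (gL (a e) (b e)), Or.inl ⟨e, rfl⟩⟩,
    fun e => ⟨mk (gR (a e) (b e)), Or.inr ⟨e, rfl⟩⟩, ?_, ?_⟩
  · intro x v
    let x' : ℤ × ℤ → ZMod 2 := fun p => if h : mk p ∈ Fs then x ⟨mk p, h⟩ else 0
    let β : ℤ × ℤ → ℤ × ℤ → ZMod 2 := fun g h => x' (gL g h) + x' (gR g h)
    have hβs : ∀ g h, β g h = β h g := by
      intro g h; simp only [β]; rw [gL_symm, gR_symm]
    have hβD : ∀ g h, D g h → β g h = 0 := by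
      intro g h hD
      have : mk (gL g h) = mk (gR g h) := Quot.sound ⟨g, h, hD, rfl, rfl⟩
      simp only [β, x', this, zmod2_add_self]
    have hβe : ∀ e, x ⟨mk (gL (a e) (b e)), Or.inl ⟨e, rfl⟩⟩ + x ⟨mk (gR (a e) (b e)), Or.inr ⟨e, rfl⟩⟩
        = β (a e) (b e) := by
      intro e
      have h1 : mk (gL (a e) (b e)) ∈ Fs := Or.inl ⟨e, rfl⟩
      have h2 : mk (gR (a e) (b e)) ∈ Fs := Or.inr ⟨e, rfl⟩
      simp only [β, x', dif_pos h1, dif_pos h2]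
    simp only [hβe, hmem]
    have hpt : ∀ g ∈ X v, ∀ h ∈ gnb g, β g h = (if h ∈ X v then β g h else 0) +
        ∑ e, β (a e) (b e) * geb (a e) (b e) g h := by
      intro g hg h hh
      by_cases h1 : ∃ e, g = a e ∧ h = b e
      · obtain ⟨e, rfl, rfl⟩ := h1
        rw [if_neg, zero_add]
        · simp [hU]
        · rw [hbv]; rw [hav] at hg; rintro h2; exact hne e (hg.trans h2.symm)
      · by_cases h2 : ∃ e, g = b e ∧ h = a e
        · obtain ⟨e, rfl, rfl⟩ := h2
          rw [if_neg, zero_add]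
          · simp only [fun e' => geb_symm (a e') (b e') (b e) (a e)]
            rw [hβs]
            simp [hU]
          · rw [hav]; rw [hbv] at hg; rintro h2; exact hne e (h2.trans hg.symm)
        · push Not at h1 h2
          rw [Finset.sum_eq_zero, add_zero]
          · split_ifs with h3
            · rfl
            · refine hβD _ _ ⟨hh, ?_, ?_⟩
              · rintro w ⟨h4, h5⟩
                rw [hX _ _ _ hg h4] at h3
                exact h3 h5
              · intro e
                exact ⟨fun h => h1 e h.1 h.2, fun h => h2 e h.1 h.2⟩
          · intro e _
            rw [geb, if_neg, if_neg, add_zero, mul_zero]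
            · exact fun h => h2 e h.1 h.2
            · exact fun h => h1 e h.1 h.2
    have htot : ∑ g ∈ X v, ∑ h ∈ gnb g, β g h = 0 :=
      Finset.sum_eq_zero fun g _ => g_closed x' g
    rw [Finset.sum_congr rfl fun g hg => Finset.sum_congr rfl (hpt g hg)] at htot
    simp only [Finset.sum_add_distrib] at htot
    have hin : ∑ g ∈ X v, ∑ h ∈ gnb g, (if h ∈ X v then β g h else 0) = 0 := by
      have := g_sum_symm (X v) (fun g h => if h ∈ gnb g then β g h else 0) ?_ ?_
      · refine Eq.trans ?_ this
        refine Finset.sum_congr rfl fun g _ => ?_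
        rw [Finset.sum_ite_mem, Finset.sum_ite_mem, Finset.inter_comm]
      · intro g h
        simp only [gnb_symm (g := g) (h := h), hβs g h]
      · intro g
        rw [if_neg]
        exact fun h => gnb_ne h rfl
    rw [hin, zero_add] at htot
    refine Eq.trans ?_ htot
    symm
    calc ∑ g ∈ X v, ∑ h ∈ gnb g, ∑ e, β (a e) (b e) * geb (a e) (b e) g h
        = ∑ g ∈ X v, ∑ e, β (a e) (b e) * ((if g = a e then 1 else 0) + (if g = b e then 1 else 0)) := by
          refine Finset.sum_congr rfl fun g _ => ?_
          rw [Finset.sum_comm]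
          refine Finset.sum_congr rfl fun e _ => ?_
          rw [← Finset.mul_sum, sum_geb (hab e)]
      _ = _ := by
          rw [Finset.sum_comm]
          refine Finset.sum_congr rfl fun e _ => ?_
          rw [← Finset.mul_sum, hsumX]
  · intro z hz
    let φ : ℤ × ℤ → ZMod 2 := fun g => ∑ e, z e * ((if g = a e then 1 else 0) + (if g = b e then 1 else 0))
    have hφ : ∀ v, ∑ g ∈ X v, φ g = 0 := by
      intro v
      simp only [φ]
      rw [Finset.sum_comm]
      refine Eq.trans ?_ (hz v)
      refine Finset.sum_congr rfl fun e _ => ?_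
      rw [← Finset.mul_sum, hsumX, hmem]
    choose τ h1 h2 h3 using fun v => g_tjoin (X v) (hconn v) φ (hφ v)
    let zz : ℤ × ℤ → ℤ × ℤ → ZMod 2 := fun g h => ∑ e, z e * geb (a e) (b e) g h + ∑ v, τ v g h
    obtain ⟨x, hx⟩ := g_exact zz (by
        intro g h
        simp only [zz]
        congr 1
        · exact Finset.sum_congr rfl fun e _ => by rw [geb_symm]
        · exact Finset.sum_congr rfl fun v _ => by rw [h1]) (by
        intro g
        simp only [zz]
        rw [Finset.sum_add_distrib, Finset.sum_comm, Finset.sum_comm (s := gnb g)]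
        have e1 : ∑ e, ∑ h ∈ gnb g, z e * geb (a e) (b e) g h = φ g := by
          refine Finset.sum_congr rfl fun e _ => ?_
          rw [← Finset.mul_sum, sum_geb (hab e)]
        rw [e1]
        by_cases hg : ∃ v, g ∈ X v
        · obtain ⟨v, hg⟩ := hg
          rw [Finset.sum_eq_single v, h3 v g hg, zmod2_add_self]
          · intro w _ hw
            refine Finset.sum_eq_zero fun h _ => h2 w g h ?_
            rintro ⟨h4, _⟩
            exact hw (hX _ _ _ h4 hg)
          · simp
        · push Not at hg
          have e2 : φ g = 0 := by
            refine Finset.sum_eq_zero fun e _ => ?_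
            rw [if_neg, if_neg, add_zero, mul_zero]
            · rintro rfl; exact hg _ (hb e)
            · rintro rfl; exact hg _ (ha e)
          rw [e2, zero_add]
          exact Finset.sum_eq_zero fun v _ => Finset.sum_eq_zero fun h _ => h2 v g h (fun h4 => hg v h4.1))
    let y : Q → ZMod 2 := Quot.lift x (by
      rintro _ _ ⟨g, h, hD, rfl, rfl⟩
      have h4 := hx g h hD.1
      have h5 : zz g h = 0 := by
        simp only [zz]
        rw [Finset.sum_eq_zero, Finset.sum_eq_zero, add_zero]
        · exact fun v _ => h2 v g h (hD.2.1 v)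
        · intro e _
          rw [geb, if_neg (hD.2.2 e).1, if_neg (hD.2.2 e).2, add_zero, mul_zero]
      rw [h5] at h4
      linear_combination h4 + zmod2_add_self (x (gL g h)))
    refine ⟨fun q => y q.1, fun e => ?_⟩
    show z e = x (gL (a e) (b e)) + x (gR (a e) (b e))
    rw [← hx _ _ (hab e)]
    simp only [zz, hU]
    rw [Finset.sum_eq_zero (s := (Finset.univ : Finset V))]
    · simp
    · intro v _
      refine h2 v _ _ ?_
      rw [hav, hbv]
      rintro ⟨h4, h5⟩
      exact hne e (h4.trans h5.symm)

theorem g_extract {V E : Type*} [Finite E] (tl hd : E → V) (hne : ∀ e, tl e ≠ hd e)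
    (W : V → Set (ℤ × ℤ)) (Y : E → Set (ℤ × ℤ)) (hWf : ∀ v, (W v).Finite) (hYf : ∀ e, (Y e).Finite)
    (hWn : ∀ v, (W v).Nonempty) (hW : ∀ v, GConn (W v))
    (hWY : ∀ e, GConn (W (tl e) ∪ Y e ∪ W (hd e)))
    (F1 : ∀ v w, v ≠ w → ∀ g, ¬ (g ∈ W v ∧ g ∈ W w))
    (F2 : ∀ w e, w ≠ tl e → w ≠ hd e → ∀ g, ¬ (g ∈ W w ∧ g ∈ Y e))
    (F3 : ∀ e e', e ≠ e' → ∀ g, ¬ (g ∈ Y e ∧ g ∈ Y e')) :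
    ∃ X : V → Finset (ℤ × ℤ), (∀ v, GConn (X v : Set (ℤ × ℤ))) ∧
      (∀ g v w, g ∈ X v → g ∈ X w → v = w) ∧
      ∀ e, ∃ a ∈ X (tl e), ∃ b ∈ X (hd e), b ∈ gnb a := by
  let Q : E → Set (ℤ × ℤ) := fun e => {g | ∃ s ∈ W (tl e),
    Relation.ReflTransGen (fun g h => h ∈ gnb g ∧ h ∈ Y e ∧ h ∉ W (hd e)) s g}
  have hQ : ∀ e g, g ∈ Q e → g ∈ W (tl e) ∨ (g ∈ Y e ∧ g ∉ W (hd e)) := by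
    rintro e g ⟨s, hs, h⟩
    rcases Relation.ReflTransGen.cases_tail h with rfl | ⟨c, _, h⟩
    · exact Or.inl hs
    · exact Or.inr h.2
  let X : V → Set (ℤ × ℤ) := fun v => {g | g ∈ W v ∨ ∃ e, tl e = v ∧ g ∈ Q e}
  have hX : ∀ v g, g ∈ X v → g ∈ W v ∨ ∃ e, tl e = v ∧ g ∈ Y e ∧ g ∉ W (hd e) := by
    rintro v g (h | ⟨e, rfl, h⟩)
    · exact Or.inl h
    · rcases hQ e g h with h | h
      · exact Or.inl h
      · exact Or.inr ⟨e, rfl, h⟩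
  have hXf : ∀ v, (X v).Finite := by
    intro v
    refine ((hWf v).union (Set.finite_iUnion hYf)).subset ?_
    intro g hg
    rcases hX v g hg with h | ⟨e, _, h, _⟩
    · exact Or.inl h
    · exact Or.inr (Set.mem_iUnion.2 ⟨e, h⟩)
  refine ⟨fun v => (hXf v).toFinset, ?_, ?_, ?_⟩
  · intro v
    rw [Set.Finite.coe_toFinset]
    intro P hP
    have hPW := hW v P (fun g hg h hh => hP g (Or.inl hg) h (Or.inl hh))
    have key : ∀ g ∈ X v, ∃ s ∈ W v, (P s ↔ P g) := by
      rintro g (h | ⟨e, rfl, s, hs, h⟩)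
      · exact ⟨g, h, Iff.rfl⟩
      · refine ⟨s, hs, ?_⟩
        have : g ∈ X (tl e) ∧ (P s ↔ P g) := by
          induction h with
          | refl => exact ⟨Or.inl hs, Iff.rfl⟩
          | tail h1 h2 ih =>
            rename_i b c
            have hc : c ∈ X (tl e) := Or.inr ⟨e, rfl, s, hs, h1.tail h2⟩
            exact ⟨hc, ih.2.trans (hP _ ih.1 _ hc h2.1)⟩
        exact this.2
    intro g hg h hh hPg
    obtain ⟨s, hs, h1⟩ := key g hg
    obtain ⟨s', hs', h2⟩ := key h hh
    exact h2.1 (hPW s hs s' hs' (h1.2 hPg))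
  · intro g v w hv hw
    rw [Set.Finite.mem_toFinset] at hv hw
    have aux : ∀ v e, g ∈ W v → g ∈ Y e → g ∉ W (hd e) → v = tl e := by
      intro v e h1 h2 h3
      by_contra h4
      refine F2 v e h4 ?_ g ⟨h1, h2⟩
      rintro rfl
      exact h3 h1
    rcases hX v g hv with h1 | ⟨e, rfl, h1, h2⟩ <;> rcases hX w g hw with h3 | ⟨e', rfl, h3, h4⟩
    · by_contra h; exact F1 v w h g ⟨h1, h3⟩
    · exact aux v e' h1 h3 h4
    · exact (aux w e h3 h1 h2).symm
    · by_cases h : e = e'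
      · rw [h]
      · exact absurd ⟨h1, h3⟩ (F3 e e' h g)
  · intro e
    have hQW : ∀ g, g ∈ Q e → g ∉ W (hd e) := by
      intro g hg h
      rcases hQ e g hg with h1 | h1
      · exact F1 _ _ (hne e) g ⟨h1, h⟩
      · exact h1.2 h
    by_contra hcon
    have hno : ∀ a ∈ Q e, ∀ b ∈ W (hd e), b ∉ gnb a := by
      intro a ha b hb hab
      refine hcon ⟨a, ?_, b, ?_, hab⟩
      · rw [Set.Finite.mem_toFinset]; exact Or.inr ⟨e, rfl, ha⟩
      · rw [Set.Finite.mem_toFinset]; exact Or.inl hb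
    have hst : ∀ g ∈ Q e, ∀ h ∈ W (tl e) ∪ Y e ∪ W (hd e), h ∈ gnb g → h ∈ Q e := by
      intro g hg h hh hgh
      by_cases h1 : h ∈ W (hd e)
      · exact absurd hgh (hno g hg h h1)
      · rcases hh with (h2 | h2) | h2
        · exact ⟨h, h2, Relation.ReflTransGen.refl⟩
        · obtain ⟨s, hs, h3⟩ := hg
          exact ⟨s, hs, h3.tail ⟨hgh, h2, h1⟩⟩
        · exact absurd h2 h1
    obtain ⟨s, hs⟩ := hWn (tl e)
    obtain ⟨k, hk⟩ := hWn (hd e)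
    refine hQW k (hWY e (fun g => g ∈ Q e) ?_ s (Or.inl (Or.inl hs)) k (Or.inr hk)
      ⟨s, hs, Relation.ReflTransGen.refl⟩) hk
    intro g hg h hh hgh
    exact ⟨fun h1 => hst g h1 h hh hgh, fun h1 => hst h h1 g hg (gnb_symm.1 hgh)⟩

/-- grid points `δ`-close to a set -/
def gX (δ : ℝ) (S : Set (EuclideanSpace ℝ (Fin 2))) : Set (ℤ × ℤ) :=
  {g | ∃ p ∈ S, |p 0 - δ * g.1| < δ ∧ |p 1 - δ * g.2| < δ}

theorem gX_union (δ : ℝ) (S T : Set (EuclideanSpace ℝ (Fin 2))) : gX δ (S ∪ T) = gX δ S ∪ gX δ T := by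
  ext g
  simp only [gX, Set.mem_ofPred_eq, Set.mem_union]
  constructor
  · rintro ⟨p, h | h, hp⟩
    · exact Or.inl ⟨p, h, hp⟩
    · exact Or.inr ⟨p, h, hp⟩
  · rintro (⟨p, h, hp⟩ | ⟨p, h, hp⟩)
    · exact ⟨p, Or.inl h, hp⟩
    · exact ⟨p, Or.inr h, hp⟩

theorem g_floor {δ : ℝ} (hδ : 0 < δ) (y : ℝ) : |y - δ * (⌊y / δ⌋ : ℤ)| < δ := by
  have h1 := Int.floor_le (y / δ)
  have h2 := Int.lt_floor_add_one (y / δ)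
  rw [le_div_iff₀ hδ] at h1
  rw [div_lt_iff₀ hδ] at h2
  rw [abs_lt]; constructor <;> nlinarith

theorem g_close {δ : ℝ} (hδ : 0 < δ) {y : ℝ} {i j : ℤ} (hi : |y - δ * i| < δ) (hj : |y - δ * j| < δ) :
    i = j ∨ i = j + 1 ∨ i = j - 1 := by
  rw [abs_lt] at hi hj
  have h1 : (i : ℝ) < j + 2 := by
    have : δ * i < δ * (j + 2) := by linarith
    exact lt_of_mul_lt_mul_left this hδ.le
  have h2 : (j : ℝ) < i + 2 := by
    have : δ * j < δ * (i + 2) := by linarith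
    exact lt_of_mul_lt_mul_left this hδ.le
  have h3 : i < j + 2 := by exact_mod_cast h1
  have h4 : j < i + 2 := by exact_mod_cast h2
  omega

theorem gX_nonempty {δ : ℝ} (hδ : 0 < δ) {S : Set (EuclideanSpace ℝ (Fin 2))} (hS : S.Nonempty) :
    (gX δ S).Nonempty := by
  obtain ⟨p, hp⟩ := hS
  exact ⟨(⌊p 0 / δ⌋, ⌊p 1 / δ⌋), p, hp, g_floor hδ _, g_floor hδ _⟩

theorem gX_conn {δ : ℝ} (hδ : 0 < δ) {S : Set (EuclideanSpace ℝ (Fin 2))} (hS : IsPreconnected S) :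
    GConn (gX δ S) := by
  intro P hP
  let N : EuclideanSpace ℝ (Fin 2) → ℤ × ℤ → Prop := fun p g => |p 0 - δ * g.1| < δ ∧ |p 1 - δ * g.2| < δ
  have step : ∀ p ∈ S, ∀ g h, N p g → N p h → h ∈ gnb g ∨ h = g → (P g ↔ P h) := by
    rintro p hp g h hg hh (h1 | rfl)
    · exact hP g ⟨p, hp, hg⟩ h ⟨p, hp, hh⟩ h1
    · exact Iff.rfl
  have hloc : ∀ p ∈ S, ∀ g h, N p g → N p h → (P g ↔ P h) := by
    rintro p hp ⟨i, j⟩ ⟨i', j'⟩ hg hh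
    have hm : N p (i', j) := ⟨hh.1, hg.2⟩
    refine (step p hp (i, j) (i', j) hg hm ?_).trans (step p hp (i', j) (i', j') hm hh ?_)
    · have h5 : i = i' ∨ i = i' + 1 ∨ i = i' - 1 := g_close hδ hg.1 hh.1
      clear hg hm hh
      rcases h5 with h5 | h5 | h5 <;> simp [gnb, h5]
    · have h5 : j = j' ∨ j = j' + 1 ∨ j = j' - 1 := g_close hδ hg.2 hh.2
      clear hg hm hh
      rcases h5 with h5 | h5 | h5 <;> simp [gnb, h5]
  have hNo : ∀ g, IsOpen {p | N p g} := by
    intro g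
    have c0 : Continuous fun p : EuclideanSpace ℝ (Fin 2) => |p 0 - δ * g.1| := by fun_prop
    have c1 : Continuous fun p : EuclideanSpace ℝ (Fin 2) => |p 1 - δ * g.2| := by fun_prop
    exact (isOpen_lt c0 continuous_const).inter (isOpen_lt c1 continuous_const)
  have hO : ∀ R : ℤ × ℤ → Prop, IsOpen {p | ∃ g, R g ∧ N p g} := by
    intro R
    have : {p | ∃ g, R g ∧ N p g} = ⋃ g ∈ {g | R g}, {p | N p g} := by
      ext p; simp
    rw [this]
    exact isOpen_biUnion fun g _ => hNo g
  rintro g ⟨p, hp, hg⟩ h ⟨q, hq, hh⟩ hPg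
  by_contra hPh
  obtain ⟨y, hy, ⟨g1, h1, h2⟩, ⟨g2, h3, h4⟩⟩ := hS _ _ (hO P) (hO fun g => ¬ P g) (by
      intro y hy
      by_cases hc : P (⌊y 0 / δ⌋, ⌊y 1 / δ⌋)
      · exact Or.inl ⟨_, hc, g_floor hδ _, g_floor hδ _⟩
      · exact Or.inr ⟨_, hc, g_floor hδ _, g_floor hδ _⟩) ⟨p, hp, g, hPg, hg⟩ ⟨q, hq, h, hPh, hh⟩
  exact h3 ((hloc y hy g1 g2 h2 h4).1 h1)

theorem gX_finite {δ : ℝ} (hδ : 0 < δ) {S : Set (EuclideanSpace ℝ (Fin 2))} (hS : IsCompact S) :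
    (gX δ S).Finite := by
  obtain ⟨M, hM⟩ := hS.isBounded.exists_norm_le
  have key : ∀ p ∈ S, ∀ k : Fin 2, ∀ i : ℤ, |p k - δ * i| < δ → i ∈ Set.Icc (-(⌈M / δ⌉ + 1)) (⌈M / δ⌉ + 1) := by
    intro p hp k i hi
    have h1 : |p k| ≤ M := (by simpa using PiLp.norm_apply_le p k : |p k| ≤ ‖p‖).trans (hM p hp)
    have h2 := Int.le_ceil (M / δ)
    rw [div_le_iff₀ hδ] at h2
    rw [abs_le] at h1
    rw [abs_lt] at hi
    have h3 : (i : ℝ) ≤ ⌈M / δ⌉ + 1 := by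
      refine le_of_mul_le_mul_left (a := δ) ?_ hδ
      nlinarith
    have h4 : -(⌈M / δ⌉ + 1 : ℝ) ≤ i := by
      refine le_of_mul_le_mul_left (a := δ) ?_ hδ
      nlinarith
    exact ⟨by exact_mod_cast h4, by exact_mod_cast h3⟩
  refine ((Set.finite_Icc (-(⌈M / δ⌉ + 1)) (⌈M / δ⌉ + 1)).prod
    (Set.finite_Icc (-(⌈M / δ⌉ + 1)) (⌈M / δ⌉ + 1))).subset ?_
  rintro g ⟨p, hp, h0, h1⟩
  exact ⟨key p hp 0 _ h0, key p hp 1 _ h1⟩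

open Filter Topology in
theorem gX_disj {S T : Set (EuclideanSpace ℝ (Fin 2))} (hS : IsCompact S) (hT : IsCompact T)
    (hd : Disjoint S T) : ∀ᶠ δ in 𝓝[>] (0 : ℝ), ∀ g, ¬ (g ∈ gX δ S ∧ g ∈ gX δ T) := by
  obtain ⟨ε, hε, h⟩ := hd.exists_thickenings hS hT.isClosed
  filter_upwards [Ioo_mem_nhdsGT (show (0 : ℝ) < ε / 4 by positivity)] with δ hδ g
  rintro ⟨⟨p, hp, hp0, hp1⟩, ⟨q, hq, hq0, hq1⟩⟩
  have hδ0 : 0 < δ := hδ.1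
  have hdist : dist p q < ε := by
    rw [EuclideanSpace.dist_eq, Real.sqrt_lt' hε]
    rw [abs_lt] at hp0 hp1 hq0 hq1
    simp only [Fin.sum_univ_two, Real.dist_eq, sq_abs]
    have h0 : (p 0 - q 0) ^ 2 ≤ (2 * δ) ^ 2 := sq_le_sq' (by linarith) (by linarith)
    have h1 : (p 1 - q 1) ^ 2 ≤ (2 * δ) ^ 2 := sq_le_sq' (by linarith) (by linarith)
    have h2 : δ < ε / 4 := hδ.2
    nlinarith
  refine Set.disjoint_left.1 h (Metric.self_subset_thickening hε S hp) ?_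
  exact Metric.mem_thickening_iff.2 ⟨q, hq, hdist⟩

open Filter Topology in
theorem p_topo {V : Type*} [Finite V] (G : SimpleGraph V) (hpl : IsPlanar G)
    (tl hd : G.edgeSet → V) (hen : ∀ e : G.edgeSet, (e : Sym2 V) = s(tl e, hd e)) :
    ∃ X : V → Finset (ℤ × ℤ), (∀ v, GConn (X v : Set (ℤ × ℤ))) ∧
      (∀ g v w, g ∈ X v → g ∈ X w → v = w) ∧
      ∀ e, ∃ a ∈ X (tl e), ∃ b ∈ X (hd e), b ∈ gnb a := by
  obtain ⟨f, arc, hinj, hpath, -, hvert, hcross⟩ := hpl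
  have hadj : ∀ e, G.Adj (tl e) (hd e) := by
    intro e
    have := e.2
    rw [hen e, SimpleGraph.mem_edgeSet] at this
    exact this
  have harc : ∀ e : G.edgeSet, IsCompact (arc e) ∧ IsPreconnected (arc e) ∧ f (tl e) ∈ arc e ∧ f (hd e) ∈ arc e := by
    intro e
    obtain ⟨γ, -, hγ⟩ := hpath _ _ (hadj e)
    rw [← hen e] at hγ
    rw [← hγ]
    exact ⟨isCompact_range γ.continuous, isPreconnected_range γ.continuous,
      ⟨0, γ.source⟩, ⟨1, γ.target⟩⟩
  -- the radius
  have hr1 : ∀ᶠ r in 𝓝[>] (0 : ℝ), ∀ v w, v ≠ w →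
      Disjoint (Metric.closedBall (f v) r) (Metric.closedBall (f w) r) := by
    rw [eventually_all]; intro v
    rw [eventually_all]; intro w
    by_cases hvw : v = w
    · simp [hvw]
    have hpos : 0 < dist (f v) (f w) := dist_pos.2 fun h => hvw (hinj h)
    filter_upwards [Ioo_mem_nhdsGT (show (0 : ℝ) < dist (f v) (f w) / 2 by positivity)] with r hr _
    have : r < dist (f v) (f w) / 2 := hr.2
    exact Metric.closedBall_disjoint_closedBall (by linarith)
  have hr2 : ∀ᶠ r in 𝓝[>] (0 : ℝ), ∀ w, ∀ e : G.edgeSet, w ≠ tl e → w ≠ hd e →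
      Disjoint (Metric.closedBall (f w) r) (arc e) := by
    rw [eventually_all]; intro w
    rw [eventually_all]; intro e
    by_cases hw : w ∈ (e : Sym2 V)
    · rw [hen e, Sym2.mem_iff] at hw
      exact Eventually.of_forall fun r h1 h2 => by tauto
    have hnot : f w ∈ (arc e)ᶜ := fun h => hw (hvert e e.2 w h)
    obtain ⟨ε, hε, hsub⟩ := Metric.isOpen_iff.1 (harc e).1.isClosed.isOpen_compl _ hnot
    filter_upwards [Ioo_mem_nhdsGT hε] with r hr _ _
    rw [← Set.subset_compl_iff_disjoint_right]
    exact (Metric.closedBall_subset_ball hr.2).trans hsub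
  obtain ⟨r, ⟨hr1, hr2⟩, hr0⟩ := ((hr1.and hr2).and self_mem_nhdsWithin).exists
  replace hr0 : 0 < r := hr0
  let D : V → Set (EuclideanSpace ℝ (Fin 2)) := fun v => Metric.closedBall (f v) r
  let A : G.edgeSet → Set (EuclideanSpace ℝ (Fin 2)) := fun e =>
    arc e \ (Metric.ball (f (tl e)) r ∪ Metric.ball (f (hd e)) r)
  have hDc : ∀ v, IsCompact (D v) := fun v => isCompact_closedBall _ _
  have hAc : ∀ e, IsCompact (A e) := fun e => (harc e).1.diff (Metric.isOpen_ball.union Metric.isOpen_ball)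
  have hAA : ∀ e e', e ≠ e' → Disjoint (A e) (A e') := by
    intro e e' hne
    rw [Set.disjoint_left]
    rintro p ⟨hp, hp'⟩ ⟨hq, hq'⟩
    have hh := hcross e e.2 e' e'.2 (fun h => hne (Subtype.ext h))
    have aux : ∀ e : G.edgeSet, p ∉ Metric.ball (f (tl e)) r ∪ Metric.ball (f (hd e)) r →
        p ∉ f '' {x | x ∈ (e : Sym2 V)} := by
      rintro e h ⟨x, hx, rfl⟩
      rw [Set.mem_ofPred_eq, hen e, Sym2.mem_iff] at hx
      rcases hx with rfl | rfl
      · exact h (Or.inl (Metric.mem_ball_self hr0))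
      · exact h (Or.inr (Metric.mem_ball_self hr0))
    have : p ∈ (∅ : Set (EuclideanSpace ℝ (Fin 2))) := hh ▸ ⟨⟨hp, aux e hp'⟩, ⟨hq, aux e' hq'⟩⟩
    exact this
  have hδ1 : ∀ᶠ δ in 𝓝[>] (0 : ℝ), ∀ v w, v ≠ w → ∀ g, ¬ (g ∈ gX δ (D v) ∧ g ∈ gX δ (D w)) := by
    rw [eventually_all]; intro v
    rw [eventually_all]; intro w
    by_cases hvw : v = w
    · simp [hvw]
    filter_upwards [gX_disj (hDc v) (hDc w) (hr1 v w hvw)] with δ h _ using h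
  have hδ2 : ∀ᶠ δ in 𝓝[>] (0 : ℝ), ∀ w e, w ≠ tl e → w ≠ hd e →
      ∀ g, ¬ (g ∈ gX δ (D w) ∧ g ∈ gX δ (A e)) := by
    rw [eventually_all]; intro w
    rw [eventually_all]; intro e
    by_cases h1 : w = tl e
    · exact Eventually.of_forall fun r h2 => absurd h1 h2
    by_cases h2 : w = hd e
    · exact Eventually.of_forall fun r _ h3 => absurd h2 h3
    filter_upwards [gX_disj (hDc w) (hAc e) ((hr2 w e h1 h2).mono_right Set.sdiff_subset)] with δ h _ _ using h
  have hδ3 : ∀ᶠ δ in 𝓝[>] (0 : ℝ), ∀ e e', e ≠ e' → ∀ g, ¬ (g ∈ gX δ (A e) ∧ g ∈ gX δ (A e')) := by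
    rw [eventually_all]; intro e
    rw [eventually_all]; intro e'
    by_cases hee : e = e'
    · simp [hee]
    filter_upwards [gX_disj (hAc e) (hAc e') (hAA e e' hee)] with δ h _ using h
  obtain ⟨δ, ⟨⟨hδ1, hδ2⟩, hδ3⟩, hδ0⟩ := (((hδ1.and hδ2).and hδ3).and self_mem_nhdsWithin).exists
  replace hδ0 : 0 < δ := hδ0
  have hDp : ∀ v, IsPreconnected (D v) := fun v => (convex_closedBall _ _).isPreconnected
  have hDm : ∀ v, f v ∈ D v := fun v => Metric.mem_closedBall_self hr0.le
  refine g_extract tl hd (fun e => (hadj e).ne) (fun v => gX δ (D v)) (fun e => gX δ (A e))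
    (fun v => gX_finite hδ0 (hDc v)) (fun e => gX_finite hδ0 (hAc e))
    (fun v => gX_nonempty hδ0 ⟨_, hDm v⟩) (fun v => gX_conn hδ0 (hDp v)) ?_ hδ1 hδ2 hδ3
  intro e
  have hset : D (tl e) ∪ A e ∪ D (hd e) = (D (tl e) ∪ arc e) ∪ D (hd e) := by
    ext p
    simp only [A, Set.mem_union, Set.mem_sdiff]
    have h1 : p ∈ Metric.ball (f (tl e)) r → p ∈ D (tl e) := fun h => Metric.ball_subset_closedBall h
    have h2 : p ∈ Metric.ball (f (hd e)) r → p ∈ D (hd e) := fun h => Metric.ball_subset_closedBall h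
    tauto
  rw [← gX_union, ← gX_union, hset]
  obtain ⟨-, a1, a2, a3⟩ := harc e
  exact gX_conn hδ0 (((hDp _).union (f (tl e)) (hDm _) a2 a1).union (f (hd e)) (Or.inr a3) (hDm _) (hDp _))

open Classical in
theorem planar_aux (t : ℕ) (ht : 3 ≤ t) {V : Type*} [Fintype V]
    (G : SimpleGraph V) (hplanar : IsPlanar G)
    (hedges : t + 1 ≤ Nat.card G.edgeSet)
    {ι : Type*} (H : ι → SimpleGraph V)
    (hcover : ∀ u v w : V, G.Adj u v → G.Adj v w → G.Adj u w →
      ∃ i, (H i).Adj u v ∧ (H i).Adj v w ∧ (H i).Adj u w)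
    (hdisj : ∀ i j : ι, i ≠ j → Disjoint (H i).edgeSet (H j).edgeSet)
    (hsize : ∀ i, Nat.card (H i).edgeSet ≤ t) :
    (4 * t + 3) * Nat.card G.edgeSet + 24 * t ≤ 12 * t * Fintype.card V := by
  have hor : ∀ e : G.edgeSet, ∃ p : V × V, (e : Sym2 V) = s(p.1, p.2) := by
    rintro ⟨e, _⟩
    induction e with | _ a b => exact ⟨(a, b), rfl⟩
  choose p hp using hor
  let en : G.edgeSet → Sym2 V := fun e => e
  have hinj : Function.Injective en := Subtype.val_injective
  have hdg : ∀ e, ¬ (en e).IsDiag := fun e => G.not_isDiag_of_mem_edgeSet e.2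
  have hne : ∀ e, (p e).1 ≠ (p e).2 := by
    intro e h
    apply hdg e
    show (e : Sym2 V).IsDiag
    rw [hp e, h]; simp
  obtain ⟨X, hX1, hX2, hX3⟩ := p_topo G hplanar (fun e => (p e).1) (fun e => (p e).2) hp
  choose a ha b hb hab using hX3
  obtain ⟨F, hF, l, r, hdual⟩ := p_minor_dual en hinj X hX1 hX2 (fun e => (p e).1) (fun e => (p e).2)
    hp hne a b ha hb hab
  let A : Option ι → Finset G.edgeSet := fun o => match o with
    | none => ∅
    | some i => Finset.univ.filter (fun e => (e : Sym2 V) ∈ (H i).edgeSet)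
  have hcard : Nat.card G.edgeSet = Fintype.card G.edgeSet := Nat.card_eq_fintype_card
  rw [hcard] at hedges ⊢
  refine p_final en hinj hdg l r hdual ht hedges A ?_ ?_ ?_
  · rintro (_ | i) (_ | j) hij
    · exact absurd rfl hij
    · simp [A]
    · simp [A]
    · have := hdisj i j (fun h => hij (by rw [h]))
      rw [Finset.disjoint_left]
      intro e h1 h2
      simp only [A, Finset.mem_filter, Finset.mem_univ, true_and] at h1 h2
      exact Set.disjoint_left.1 this h1 h2
  · rintro (_ | i)
    · simp [A]
    · refine le_trans ?_ (hsize i)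
      rw [Nat.card_eq_fintype_card, ← Set.toFinset_card]
      refine Finset.card_le_card_of_injOn (fun e => (e : Sym2 V)) ?_ (Subtype.val_injective.injOn)
      intro e he
      simpa [A] using he
  · intro u v w e1 e2 e3 h1 h2 h3
    have aux : ∀ (e : G.edgeSet) (u v : V), en e = s(u, v) → G.Adj u v := by
      intro e u v h
      have := e.2
      change (e : Sym2 V) = _ at h
      rw [h] at this
      exact this
    obtain ⟨i, b1, b2, b3⟩ := hcover u v w (aux _ _ _ h1) (aux _ _ _ h2) (aux _ _ _ h3)
    change (e1 : Sym2 V) = _ at h1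
    change (e2 : Sym2 V) = _ at h2
    change (e3 : Sym2 V) = _ at h3
    refine ⟨some i, ?_, ?_, ?_⟩
    · simp [A, h1, b1]
    · simp [A, h2, b2]
    · simp [A, h3, b3]

/-- **Lemma (planar edge upper bound).** Let `t ≥ 3` and let `G` be a simple planar
graph with at least `t+1` edges. Suppose the subgraph of `G` induced by its triangles
decomposes as an edge-disjoint union of subgraphs `H i`, each containing between `3`
and `t` edges, such that every triangle of `G` lies in some `H i`. Then
`e(G) ≤ (12t/(4t+3)) · (v(G) - 2)`. -/
theorem planar_edge_upper_bound (t : ℕ) (ht : 3 ≤ t) {V : Type*} [Fintype V]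
    (G : SimpleGraph V) (hplanar : IsPlanar G)
    (hedges : t + 1 ≤ Nat.card G.edgeSet)
    {ι : Type*} (H : ι → SimpleGraph V)
    (hle : ∀ i, H i ≤ G)
    (hcover : ∀ u v w : V, G.Adj u v → G.Adj v w → G.Adj u w →
      ∃ i, (H i).Adj u v ∧ (H i).Adj v w ∧ (H i).Adj u w)
    (hsub : ∀ (i : ι) (u v : V), (H i).Adj u v → ∃ w, G.Adj u w ∧ G.Adj v w)
    (hdisj : ∀ i j : ι, i ≠ j → Disjoint (H i).edgeSet (H j).edgeSet)
    (hsize : ∀ i, 3 ≤ Nat.card (H i).edgeSet ∧ Nat.card (H i).edgeSet ≤ t) :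
    (Nat.card G.edgeSet : ℝ) ≤ (12 * t / (4 * t + 3)) * ((Fintype.card V : ℝ) - 2) := by
  have h := planar_aux t ht G hplanar hedges H hcover hdisj (fun i => (hsize i).2)
  have h' : (4 * (t : ℝ) + 3) * (Nat.card G.edgeSet : ℝ) + 24 * t ≤ 12 * t * (Fintype.card V : ℝ) := by
    exact_mod_cast h
  rw [div_mul_eq_mul_div, le_div_iff₀ (by positivity)]
  linarith
end

section
/- Let ℒ be a simple arrangement of n ≥ 4 lines in the real projective plane ℝP², i.e., n pairwise distinct projective lines such that no point of ℝP² lies on three of them. Then the number of triangles of ℒ (two-dimensional cells of the cell decomposition of ℝP² induced by ℒ whose boundary meets exactly three of the lines) is at most n(n−1)/3. Consequently, some line of ℒ is incident to at most n−1 triangles of ℒ. -/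
/-- The quotient topology on the real projective plane
`ℝP² = Projectivization ℝ (Fin 3 → ℝ)` (the quotient of `ℝ³ ∖ {0}` by scaling). -/
noncomputable instance : TopologicalSpace (Projectivization ℝ (Fin 3 → ℝ)) :=
  inferInstanceAs (TopologicalSpace (Quotient (projectivizationSetoid ℝ (Fin 3 → ℝ))))

/-- The projective line in `ℝP²` determined by a two-dimensional linear subspace `W`
of `ℝ³`: the set of points whose representing line lies in `W`. -/
def projLine (W : Submodule ℝ (Fin 3 → ℝ)) : Set (Projectivization ℝ (Fin 3 → ℝ)) :=
  {x | x.submodule ≤ W}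

/-- The two-dimensional cells of the arrangement of the lines `projLine (W i)`: the
connected components of the complement of the union of the lines. -/
def IsArrCell {n : ℕ} (W : Fin n → Submodule ℝ (Fin 3 → ℝ))
    (C : Set (Projectivization ℝ (Fin 3 → ℝ))) : Prop :=
  ∃ x ∈ (⋃ i, projLine (W i))ᶜ, C = connectedComponentIn (⋃ i, projLine (W i))ᶜ x

/-- A triangle of the arrangement: a two-dimensional cell whose closure meets exactly
three of the lines. -/
def IsArrTriangle {n : ℕ} (W : Fin n → Submodule ℝ (Fin 3 → ℝ))
    (C : Set (Projectivization ℝ (Fin 3 → ℝ))) : Prop :=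
  IsArrCell W C ∧ Nat.card {i : Fin n // (closure C ∩ projLine (W i)).Nonempty} = 3

namespace GrunAux

abbrev V3 := Fin 3 → ℝ

/-- indices of lines touched by the closed cone of `v` -/
def Touch {n : ℕ} (f : Fin n → V3 →ₗ[ℝ] ℝ) (v : V3) (i : Fin n) : Prop :=
  ∃ w : V3, w ≠ 0 ∧ (∀ j, 0 ≤ f j v * f j w) ∧ f i w = 0

/-- the projective open cell of `v` -/
def Cell {n : ℕ} (f : Fin n → V3 →ₗ[ℝ] ℝ) (v : V3) : Set (Projectivization ℝ V3) :=
  {x | ∃ (w : V3) (hw : w ≠ 0), (∀ j, 0 < f j v * f j w) ∧ Projectivization.mk ℝ w hw = x}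

lemma count {S : Type*} [Fintype S] {n : ℕ} (hn : 4 ≤ n) (m : S → Finset (Fin n))
    (hc : ∀ C, (m C).card = 3)
    (h : ∀ b c, b ≠ c → ∃ g : S → Bool, ∀ C C', b ∈ m C → c ∈ m C → b ∈ m C' → c ∈ m C' →
      g C = g C' → C = C') :
    3 * Fintype.card S ≤ n * (n - 1) ∧
    ∃ i, (Finset.univ.filter (fun C => i ∈ m C)).card ≤ n - 1 := by
  classical
  have h1 : 3 * Fintype.card S ≤ n * (n - 1) := by
    have key := Finset.sum_card_bipartiteAbove_eq_sum_card_bipartiteBelow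
      (s := (Finset.univ : Finset S)) (t := (Finset.univ : Finset (Fin n)).offDiag)
      (fun C p => p ∈ (m C).offDiag)
    have hl : ∀ C ∈ (Finset.univ : Finset S),
        (Finset.bipartiteAbove (fun C p => p ∈ (m C).offDiag)
          (Finset.univ : Finset (Fin n)).offDiag C).card = 6 := by
      intro C _
      have : Finset.bipartiteAbove (fun C p => p ∈ (m C).offDiag)
          (Finset.univ : Finset (Fin n)).offDiag C = (m C).offDiag := by
        ext p
        simp only [Finset.bipartiteAbove, Finset.mem_filter, Finset.mem_offDiag, Finset.mem_univ]
        tauto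
      rw [this, Finset.offDiag_card, hc]
    rw [Finset.sum_congr rfl hl] at key
    have hr : ∀ p ∈ (Finset.univ : Finset (Fin n)).offDiag,
        (Finset.bipartiteBelow (fun C p => p ∈ (m C).offDiag)
          (Finset.univ : Finset S) p).card ≤ 2 := by
      rintro ⟨b, c⟩ hp
      have hbc : b ≠ c := by simpa using hp
      obtain ⟨g, hg⟩ := h b c hbc
      have := Finset.card_le_card_of_injOn (t := (Finset.univ : Finset Bool)) g
        (s := (Finset.bipartiteBelow (fun C p => p ∈ (m C).offDiag)
          (Finset.univ : Finset S) (b, c))) (fun _ _ => by simp) (by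
          intro C hC C' hC' hgg
          simp [Finset.bipartiteBelow] at hC hC'
          exact hg C C' hC.1 hC.2.1 hC'.1 hC'.2.1 hgg)
      simpa using this
    have := Finset.sum_le_sum hr
    rw [← key] at this
    simp only [Finset.sum_const, smul_eq_mul, Finset.offDiag_card, Finset.card_univ,
      Fintype.card_fin] at this
    rw [Nat.mul_sub, mul_one]
    omega
  refine ⟨h1, ?_⟩
  by_contra! hcon
  have key := Finset.sum_card_bipartiteAbove_eq_sum_card_bipartiteBelow
      (s := (Finset.univ : Finset S)) (t := (Finset.univ : Finset (Fin n)))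
      (fun C i => i ∈ m C)
  have hl : ∀ C ∈ (Finset.univ : Finset S),
        (Finset.bipartiteAbove (fun C i => i ∈ m C)
          (Finset.univ : Finset (Fin n)) C).card = 3 := by
    intro C _
    have : Finset.bipartiteAbove (fun C i => i ∈ m C)
          (Finset.univ : Finset (Fin n)) C = m C := by
      ext p
      simp [Finset.bipartiteAbove]
    rw [this, hc]
  rw [Finset.sum_congr rfl hl] at key
  have hr : ∀ i ∈ (Finset.univ : Finset (Fin n)), n ≤
        (Finset.bipartiteBelow (fun C i => i ∈ m C)
          (Finset.univ : Finset S) i).card := by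
    intro i _
    exact Nat.le_of_pred_lt (hcon i)
  have := Finset.sum_le_sum hr
  rw [← key] at this
  simp only [Finset.sum_const, smul_eq_mul, Finset.card_univ, Fintype.card_fin] at this
  rw [Nat.mul_sub, mul_one] at h1
  have : n ≤ n * n := by nlinarith
  omega

lemma lemA {n : ℕ} (f : Fin n → V3 →ₗ[ℝ] ℝ) (v : V3) (hv : ∀ i, f i v ≠ 0)
    (T : Finset (Fin n)) (hT : ∀ i, i ∈ T ↔ Touch f v i) (a : Fin n) (ha : a ∈ T)
    (w : V3) (hw : w ≠ 0) (hwT : ∀ i ∈ T, 0 ≤ f i v * f i w) :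
    ∀ j, j ∉ T → 0 < f j v * f j w := by
  intro j₀ hj₀
  obtain ⟨j, hj, hmax⟩ := Finset.exists_max_image (Finset.univ.filter (· ∉ T))
    (fun j => -(f j w / f j v)) ⟨j₀, by simpa using hj₀⟩
  have hj : j ∉ T := by simpa using hj
  have e : ∀ k, f k v * f k w = (f k w / f k v) * (f k v)^2 := by
    intro k; field_simp [hv k]
  have sq : ∀ k, 0 < (f k v)^2 := fun k => by have := hv k; positivity
  by_cases hs : 0 ≤ -(f j w / f j v)
  · exfalso
    apply hj
    rw [hT]
    set s := -(f j w / f j v) with hsdef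
    have e2 : ∀ k, f k v * f k (w + s • v) = f k v * f k w + s * (f k v)^2 := by
      intro k; simp; ring
    refine ⟨w + s • v, ?_, ?_, ?_⟩
    · rcases hs.eq_or_lt with h0 | h0
      · rw [← h0]; simpa using hw
      · intro h
        have h1 := e2 a
        rw [h] at h1
        have := mul_pos h0 (sq a)
        have := hwT a ha
        simp at h1
        linarith
    · intro k
      rw [e2]
      by_cases hk : k ∈ T
      · have := hwT k hk
        have := mul_nonneg hs (sq k).le
        linarith
      · have h1 := hmax k (by simpa using hk)
        rw [e k, ← add_mul]
        apply mul_nonneg _ (sq k).le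
        linarith
    · have := hv j
      simp [hsdef]
      field_simp
      ring
  · have h1 := hmax j₀ (by simpa using hj₀)
    rw [e]
    exact mul_pos (by linarith) (sq j₀)

/-- general position -/
def GP {n : ℕ} (f : Fin n → V3 →ₗ[ℝ] ℝ) : Prop :=
  ∀ i j l, i ≠ j → i ≠ l → j ≠ l → ∀ v, f i v = 0 → f j v = 0 → f l v = 0 → v = 0

lemma exists_vals {n : ℕ} {f : Fin n → V3 →ₗ[ℝ] ℝ} (hf : GP f) {i j l : Fin n}
    (h1 : i ≠ j) (h2 : i ≠ l) (h3 : j ≠ l) (x y z : ℝ) :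
    ∃ v, f i v = x ∧ f j v = y ∧ f l v = z := by
  let F : V3 →ₗ[ℝ] V3 := LinearMap.pi ![f i, f j, f l]
  have hF : Function.Injective F := by
    rw [← LinearMap.ker_eq_bot, LinearMap.ker_eq_bot']
    intro v hv
    exact hf i j l h1 h2 h3 v (by simpa [F] using congrFun hv 0) (by simpa [F] using congrFun hv 1)
      (by simpa [F] using congrFun hv 2)
  obtain ⟨v, hv⟩ := LinearMap.injective_iff_surjective.1 hF ![x, y, z]
  exact ⟨v, by simpa [F] using congrFun hv 0, by simpa [F] using congrFun hv 1,
      by simpa [F] using congrFun hv 2⟩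

lemma third {n : ℕ} {T : Finset (Fin n)} (hc : T.card = 3) {b c : Fin n} (hbc : b ≠ c)
    (hb : b ∈ T) (hcT : c ∈ T) : ∃ a ∈ T, a ≠ b ∧ a ≠ c ∧ T = {a, b, c} := by
  classical
  have h : 1 ≤ ((T.erase b).erase c).card := by
    rw [Finset.card_erase_of_mem, Finset.card_erase_of_mem hb]
    · omega
    · simp [hcT, hbc.symm]
  obtain ⟨a, ha⟩ := Finset.card_pos.1 h
  simp at ha
  refine ⟨a, ha.2.2, ha.2.1, ha.1, ?_⟩
  symm
  apply Finset.eq_of_subset_of_card_le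
  · intro x; simp; rintro (rfl | rfl | rfl) <;> tauto
  · rw [Finset.card_eq_three.2 ⟨a, b, c, ha.2.1, ha.1, hbc, rfl⟩]; omega

lemma pos_trans {a b c : ℝ} (h1 : 0 < a * b) (h2 : 0 < a * c) : 0 < b * c := by
  have : 0 < (a*a) * (b*c) := by nlinarith [mul_pos h1 h2]
  exact pos_of_mul_pos_right this (mul_self_nonneg a)

lemma adj {n : ℕ} (hn : 4 ≤ n) {f : Fin n → V3 →ₗ[ℝ] ℝ} (hf : GP f) (v₁ v₂ : V3)
    (hv₁ : ∀ i, f i v₁ ≠ 0) (hv₂ : ∀ i, f i v₂ ≠ 0) (T₁ T₂ : Finset (Fin n))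
    (hT₁ : ∀ i, i ∈ T₁ ↔ Touch f v₁ i) (hT₂ : ∀ i, i ∈ T₂ ↔ Touch f v₂ i)
    (hc₁ : T₁.card = 3) (hc₂ : T₂.card = 3) (b c : Fin n) (hbc : b ≠ c)
    (hb₁ : b ∈ T₁) (hcc₁ : c ∈ T₁) (hb₂ : b ∈ T₂) (hcc₂ : c ∈ T₂)
    (hs : ∀ j, j ≠ c → 0 < f j v₁ * f j v₂) (hsc : f c v₁ * f c v₂ < 0) : False := by
  obtain ⟨a, haT, hab, hac, hTe⟩ := third hc₁ hbc hb₁ hcc₁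
  obtain ⟨p, hpa, hpc, hpb⟩ := exists_vals hf hac hab hbc.symm 0 0 (f b v₁)
  have hp0 : p ≠ 0 := by
    rintro rfl
    exact hv₁ b (by simpa using hpb.symm)
  have hp1 := lemA f v₁ hv₁ T₁ hT₁ a haT p hp0 (by
    intro i hi
    rw [hTe] at hi
    simp at hi
    rcases hi with rfl | rfl | rfl
    · simp [hpa]
    · rw [hpb]; exact mul_self_nonneg _
    · simp [hpc])
  have ha2 : a ∈ T₂ := by
    rw [hT₂]
    refine ⟨p, hp0, ?_, hpa⟩
    intro j
    by_cases hjc : j = c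
    · subst hjc; simp [hpc]
    by_cases hja : j = a
    · subst hja; simp [hpa]
    by_cases hjb : j = b
    · subst hjb; rw [hpb]; have := hs j hjc; linarith
    · exact (pos_trans (hs j hjc) (hp1 j (by rw [hTe]; simp [*]))).le
  have hT : T₂ = T₁ := by
    symm
    apply Finset.eq_of_subset_of_card_le
    · rw [hTe]; intro x; simp; rintro (rfl | rfl | rfl) <;> assumption
    · omega
  obtain ⟨j, hj⟩ : ∃ j, j ∉ T₁ := by
    by_contra! h
    have : T₁ = Finset.univ := by ext; simp [h]
    rw [this] at hc₁
    simp at hc₁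
    omega
  obtain ⟨q, hqa, hqb, hqc⟩ := exists_vals hf hab hac hbc 0 0 (f c v₁)
  have hq0 : q ≠ 0 := by
    rintro rfl
    exact hv₁ c (by simpa using hqc.symm)
  have h1 := lemA f v₁ hv₁ T₁ hT₁ a haT q hq0 (by
    intro i hi
    rw [hTe] at hi
    simp at hi
    rcases hi with rfl | rfl | rfl
    · simp [hqa]
    · simp [hqb]
    · rw [hqc]; exact mul_self_nonneg _) j hj
  have h2 := lemA f v₂ hv₂ T₂ hT₂ a ha2 (-q) (by simpa using hq0) (by
    intro i hi
    rw [hT, hTe] at hi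
    simp at hi
    rcases hi with rfl | rfl | rfl
    · simp [hqa]
    · simp [hqb]
    · rw [map_neg, hqc]; linarith) j (by rw [hT]; exact hj)
  have hjc : j ≠ c := by rintro rfl; exact hj hcc₁
  have h3 := pos_trans (hs j hjc) h1
  rw [map_neg] at h2
  linarith

lemma touch_neg {n : ℕ} (f : Fin n → V3 →ₗ[ℝ] ℝ) (v : V3) (i : Fin n) :
    Touch f (-v) i ↔ Touch f v i := by
  constructor
  · rintro ⟨w, hw, h, h0⟩
    exact ⟨-w, by simpa using hw, fun j => by have := h j; simp at this ⊢; exact this,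
      by simpa using h0⟩
  · rintro ⟨w, hw, h, h0⟩
    exact ⟨-w, by simpa using hw, fun j => by have := h j; simp at this ⊢; exact this,
      by simpa using h0⟩

lemma cell_neg {n : ℕ} (f : Fin n → V3 →ₗ[ℝ] ℝ) (v : V3) : Cell f (-v) = Cell f v := by
  have : ∀ v, Cell f (-v) ⊆ Cell f v := by
    rintro v x ⟨w, hw, h, rfl⟩
    refine ⟨-w, by simpa using hw, fun j => by have := h j; simp at this ⊢; exact this, ?_⟩
    rw [Projectivization.mk_eq_mk_iff']
    exact ⟨-1, by simp⟩
  apply Set.Subset.antisymm (this v)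
  have h := this (-v)
  rwa [neg_neg] at h

lemma cell_congr {n : ℕ} (f : Fin n → V3 →ₗ[ℝ] ℝ) (v v' : V3) (h : ∀ j, 0 < f j v * f j v') :
    Cell f v = Cell f v' := by
  ext x
  constructor
  · rintro ⟨w, hw, h', rfl⟩
    exact ⟨w, hw, fun j => pos_trans (h j) (h' j), rfl⟩
  · rintro ⟨w, hw, h', rfl⟩
    exact ⟨w, hw, fun j => pos_trans (by rw [mul_comm]; exact h j) (h' j), rfl⟩

/-- normalized representative -/
lemma normalize {n : ℕ} {f : Fin n → V3 →ₗ[ℝ] ℝ} (hf : GP f) (v : V3)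
    (hv : ∀ i, f i v ≠ 0) (T : Finset (Fin n))
    (hT : ∀ i, i ∈ T ↔ Touch f v i) (hc : T.card = 3) (b c : Fin n) (hbc : b ≠ c)
    (hb : b ∈ T) (hcT : c ∈ T) (p : V3) (hp : p ≠ 0) (hpb : f b p = 0) (hpc : f c p = 0) :
    ∃ v', Cell f v' = Cell f v ∧ (∀ i, f i v' ≠ 0) ∧ (∀ i, i ∈ T ↔ Touch f v' i) ∧
      ∀ j, j ≠ b → j ≠ c → 0 < f j p * f j v' := by
  obtain ⟨a, haT, hab, hac, hTe⟩ := third hc hbc hb hcT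
  have hpa : f a p ≠ 0 := fun h => hp (hf a b c hab hac hbc p h hpb hpc)
  have main : ∀ v', (∀ i, f i v' ≠ 0) → (∀ i, i ∈ T ↔ Touch f v' i) → 0 < f a v' * f a p →
      ∀ j, j ≠ b → j ≠ c → 0 < f j p * f j v' := by
    intro v' hv' hT' hpos j hjb hjc
    by_cases hja : j = a
    · subst hja; linarith
    rw [mul_comm]
    apply lemA f v' hv' T hT' a haT p hp
    · intro i hi
      rw [hTe] at hi
      simp at hi
      rcases hi with rfl | rfl | rfl
      · exact hpos.le
      · simp [hpb]
      · simp [hpc]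
    · rw [hTe]; simp [*]
  rcases lt_or_gt_of_ne (mul_ne_zero (hv a) hpa) with h | h
  · refine ⟨-v, cell_neg f v, by simpa using hv, fun i => by rw [touch_neg]; exact hT i, ?_⟩
    apply main
    · simpa using hv
    · exact fun i => by rw [touch_neg]; exact hT i
    · simpa using h
  · exact ⟨v, rfl, hv, hT, main v hv hT h⟩

/-! ### topology -/

noncomputable def pr (w : {w : V3 // w ≠ 0}) : Projectivization ℝ V3 :=
  Projectivization.mk ℝ w.1 w.2

lemma pr_quot : Topology.IsQuotientMap pr := isQuotientMap_quot_mk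

lemma pr_eq_iff (w w' : {w : V3 // w ≠ 0}) : pr w = pr w' ↔ ∃ a : ℝ, a ≠ 0 ∧ a • w'.1 = w.1 := by
  unfold pr
  rw [Projectivization.mk_eq_mk_iff']
  constructor
  · rintro ⟨a, ha⟩
    refine ⟨a, ?_, ha⟩
    rintro rfl
    exact w.2 (by rw [← ha, zero_smul])
  · rintro ⟨a, _, ha⟩
    exact ⟨a, ha⟩

lemma mem_cell {n : ℕ} (f : Fin n → V3 →ₗ[ℝ] ℝ) (v : V3) (w : {w : V3 // w ≠ 0}) :
    pr w ∈ Cell f v ↔ (∀ j, 0 < f j v * f j w.1) ∨ (∀ j, 0 < f j v * f j (-w.1)) := by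
  constructor
  · rintro ⟨w', hw', h, e⟩
    obtain ⟨a, ha, e⟩ := (pr_eq_iff w ⟨w', hw'⟩).1 e.symm
    simp only at e
    rcases lt_or_gt_of_ne ha with h' | h'
    · right
      intro j
      rw [← e]
      have := mul_pos (neg_pos.2 h') (h j)
      simp; linarith
    · left
      intro j
      rw [← e]
      have := mul_pos h' (h j)
      simp; linarith
  · rintro (h | h)
    · exact ⟨w.1, w.2, h, rfl⟩
    · refine ⟨-w.1, by simpa using w.2, h, ?_⟩
      unfold pr
      rw [Projectivization.mk_eq_mk_iff']
      exact ⟨-1, by simp⟩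

lemma cont {n : ℕ} (f : Fin n → V3 →ₗ[ℝ] ℝ) (j : Fin n) : Continuous (f j) :=
  LinearMap.continuous_of_finiteDimensional _

lemma cell_open {n : ℕ} (f : Fin n → V3 →ₗ[ℝ] ℝ) (v : V3) : IsOpen (Cell f v) := by
  rw [← pr_quot.isOpen_preimage]
  have : pr ⁻¹' Cell f v = (⋂ j, {w | 0 < f j v * f j w.1}) ∪ (⋂ j, {w | 0 < f j v * f j (-w.1)}) := by
    ext w
    simp only [Set.mem_preimage, mem_cell, Set.mem_union, Set.mem_iInter, Set.mem_setOf_eq]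
  rw [this]
  have := cont f
  apply IsOpen.union
  · exact isOpen_iInter_of_finite fun j => isOpen_lt continuous_const (by fun_prop)
  · exact isOpen_iInter_of_finite fun j => isOpen_lt continuous_const (by fun_prop)

lemma cell_preconn {n : ℕ} (hn : 4 ≤ n) (f : Fin n → V3 →ₗ[ℝ] ℝ) (v : V3) :
    IsPreconnected (Cell f v) := by
  have hne : ∀ w, (∀ j, 0 < f j v * f j w) → w ≠ 0 := by
    rintro w h rfl
    have := h ⟨0, by omega⟩
    simp at this
  have hconv : Convex ℝ {w | ∀ j, 0 < f j v * f j w} := by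
    intro x hx y hy a b ha hb hab j
    simp only [map_add, map_smul, smul_eq_mul]
    have h1 := hx j
    have h2 := hy j
    rcases ha.eq_or_lt with rfl | ha'
    · have : b = 1 := by linarith
      subst this; simpa using h2
    · have := mul_pos ha' h1
      have := mul_nonneg hb h2.le
      linarith
  have h := hconv.isPreconnected
  rw [isPreconnected_iff_preconnectedSpace] at h
  let g : {w | ∀ j, 0 < f j v * f j w} → Projectivization ℝ V3 := fun w => pr ⟨w.1, hne w.1 w.2⟩
  have hg : Continuous g := pr_quot.continuous.comp (by fun_prop)
  have := isPreconnected_range hg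
  convert this
  ext x
  constructor
  · rintro ⟨w, hw, h, rfl⟩
    exact ⟨⟨w, h⟩, rfl⟩
  · rintro ⟨⟨w, h⟩, rfl⟩
    exact ⟨w, hne w h, h, rfl⟩

lemma pr_mem_line {W : Submodule ℝ V3} {g : V3 →ₗ[ℝ] ℝ} (hg : LinearMap.ker g = W)
    (w : {w : V3 // w ≠ 0}) : pr w ∈ projLine W ↔ g w.1 = 0 := by
  unfold projLine pr
  simp [Projectivization.submodule_mk, ← hg]

lemma comp_eq {n : ℕ} (hn : 4 ≤ n) {W : Fin n → Submodule ℝ V3} {f : Fin n → V3 →ₗ[ℝ] ℝ}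
    (hW : ∀ i, LinearMap.ker (f i) = W i) (v : {w : V3 // w ≠ 0}) (hv : ∀ i, f i v.1 ≠ 0) :
    connectedComponentIn (⋃ i, projLine (W i))ᶜ (pr v) = Cell f v.1 := by
  have hU : ∀ w, pr w ∈ (⋃ i, projLine (W i))ᶜ ↔ ∀ i, f i w.1 ≠ 0 := by
    intro w
    simp [pr_mem_line (hW _)]
  have hself : ∀ w : {w : V3 // w ≠ 0}, (∀ i, f i w.1 ≠ 0) → pr w ∈ Cell f w.1 := fun w hw =>
    ⟨w.1, w.2, fun j => mul_self_pos.2 (hw j), rfl⟩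
  have hsub : ∀ w, Cell f w ⊆ (⋃ i, projLine (W i))ᶜ := by
    rintro w x ⟨u, hu, h, rfl⟩
    exact (hU ⟨u, hu⟩).2 (fun i => right_ne_zero_of_mul (h i).ne')
  apply Set.Subset.antisymm
  · apply isPreconnected_connectedComponentIn.subset_left_of_subset_union
      (v := ⋃ w ∈ {w : {w : V3 // w ≠ 0} | (∀ i, f i w.1 ≠ 0) ∧ pr w ∉ Cell f v.1}, Cell f w.1)
      (cell_open f v.1)
    · exact isOpen_biUnion fun w _ => cell_open f w.1
    · rw [Set.disjoint_left]
      intro x hx hx'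
      simp only [Set.mem_iUnion] at hx'
      obtain ⟨w, ⟨hw, hw'⟩, hxw⟩ := hx'
      obtain ⟨u, hu, h, rfl⟩ := hx
      apply hw'
      have e1 : Cell f v.1 = Cell f u := cell_congr f _ _ h
      rw [e1]
      rcases (mem_cell f w.1 ⟨u, hu⟩).1 hxw with h1 | h1
      · rw [← cell_congr f _ _ h1]; exact hself w hw
      · rw [← cell_neg f u, ← cell_congr f _ _ h1]; exact hself w hw
    · intro x hx
      have hx := connectedComponentIn_subset _ _ hx
      obtain ⟨w, rfl⟩ := pr_quot.surjective x
      rw [hU] at hx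
      by_cases h : pr w ∈ Cell f v.1
      · exact Or.inl h
      · right
        simp only [Set.mem_iUnion]
        exact ⟨w, ⟨hx, h⟩, hself w hx⟩
    · exact ⟨pr v, mem_connectedComponentIn ((hU v).2 hv), hself v hv⟩
  · exact (cell_preconn hn f v.1).subset_connectedComponentIn (hself v hv) (hsub _)

lemma closure_iff {n : ℕ} (hn : 4 ≤ n) {W : Fin n → Submodule ℝ V3} {f : Fin n → V3 →ₗ[ℝ] ℝ}
    (hW : ∀ i, LinearMap.ker (f i) = W i) (v : V3) (hv : ∀ i, f i v ≠ 0) (i : Fin n) :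
    (closure (Cell f v) ∩ projLine (W i)).Nonempty ↔ Touch f v i := by
  have hcont := cont f
  constructor
  · rintro ⟨x, hx, hxi⟩
    let Z : Set (Projectivization ℝ V3) := {x | ∃ w, (∀ j, 0 ≤ f j v * f j w.1) ∧ pr w = x}
    have hZ : IsClosed Z := by
      rw [← pr_quot.isClosed_preimage]
      have : pr ⁻¹' Z = (⋂ j, {w | 0 ≤ f j v * f j w.1}) ∪ (⋂ j, {w | 0 ≤ f j v * f j (-w.1)}) := by
        ext w
        simp only [Set.mem_preimage, Set.mem_union, Set.mem_iInter, Set.mem_setOf_eq, Z]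
        constructor
        · rintro ⟨w', h, e⟩
          obtain ⟨a, ha, e⟩ := (pr_eq_iff w w').1 e.symm
          rcases lt_or_gt_of_ne ha with h' | h'
          · right
            intro j
            rw [← e]
            have := mul_nonneg (neg_pos.2 h').le (h j)
            simp; linarith
          · left
            intro j
            rw [← e]
            have := mul_nonneg h'.le (h j)
            simp; linarith
        · rintro (h | h)
          · exact ⟨w, h, rfl⟩
          · exact ⟨⟨-w.1, by simpa using w.2⟩, h, (pr_eq_iff _ _).2 ⟨-1, by simp, by simp⟩⟩
      rw [this]
      apply IsClosed.union
      · exact isClosed_iInter fun j => isClosed_le continuous_const (by fun_prop)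
      · exact isClosed_iInter fun j => isClosed_le continuous_const (by fun_prop)
    have hsub : closure (Cell f v) ⊆ Z := by
      apply closure_minimal _ hZ
      rintro y ⟨w, hw, h, rfl⟩
      exact ⟨⟨w, hw⟩, fun j => (h j).le, rfl⟩
    obtain ⟨w, hw, rfl⟩ := hsub hx
    exact ⟨w.1, w.2, hw, (pr_mem_line (hW i) w).1 hxi⟩
  · rintro ⟨w, hw, h, h0⟩
    have hpos : ∀ m : ℕ, ∀ j, 0 < f j v * f j (w + (1 / ((m : ℝ) + 1)) • v) := by
      intro m j
      have h1 : 0 < 1 / ((m : ℝ) + 1) := by positivity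
      have h2 := mul_pos h1 (mul_self_pos.2 (hv j))
      have h3 := h j
      simp only [map_add, map_smul, smul_eq_mul]
      linarith
    have hne : ∀ m : ℕ, w + (1 / ((m : ℝ) + 1)) • v ≠ 0 := by
      intro m e
      have := hpos m ⟨0, by omega⟩
      rw [e] at this
      simp at this
    refine ⟨pr ⟨w, hw⟩, ?_, (pr_mem_line (hW i) _).2 h0⟩
    have ht : Filter.Tendsto (fun m : ℕ => (⟨w + (1 / ((m : ℝ) + 1)) • v, hne m⟩ : {w : V3 // w ≠ 0}))
        Filter.atTop (nhds ⟨w, hw⟩) := by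
      rw [tendsto_subtype_rng]
      have := (tendsto_one_div_add_atTop_nhds_zero_nat (𝕜 := ℝ)).smul_const v
      simpa using this.const_add w
    apply mem_closure_of_tendsto ((pr_quot.continuous.tendsto _).comp ht)
    exact Filter.Eventually.of_forall fun m => ⟨_, hne m, hpos m, rfl⟩

end GrunAux

open GrunAux

/-- **Grünbaum's observation.** A simple arrangement of `n ≥ 4` lines in the real
projective plane (no point lying on three of the lines) has at most `n(n-1)/3`
triangles; consequently, some line of the arrangement is incident to at most `n-1`
triangles. -/
theorem grunbaum_triangle_bound (n : ℕ) (hn : 4 ≤ n)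
    (W : Fin n → Submodule ℝ (Fin 3 → ℝ))
    (hrank : ∀ i, Module.finrank ℝ (W i) = 2)
    (hdist : Function.Injective W)
    (hsimple : ∀ (x : Projectivization ℝ (Fin 3 → ℝ)) (i j l : Fin n),
      i ≠ j → i ≠ l → j ≠ l →
      x ∈ projLine (W i) → x ∈ projLine (W j) → x ∈ projLine (W l) → False) :
    (Nat.card {C : Set (Projectivization ℝ (Fin 3 → ℝ)) // IsArrTriangle W C} : ℝ)
        ≤ (n : ℝ) * ((n : ℝ) - 1) / 3 ∧
      ∃ i : Fin n,
        Nat.card {C : Set (Projectivization ℝ (Fin 3 → ℝ)) //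
          IsArrTriangle W C ∧ (closure C ∩ projLine (W i)).Nonempty} ≤ n - 1 := by
  classical
  have hex : ∀ i, ∃ g : V3 →ₗ[ℝ] ℝ, LinearMap.ker g = W i := by
    intro i
    have hlt : W i < ⊤ := by
      rw [lt_top_iff_ne_top]
      intro h
      have := hrank i
      rw [h, finrank_top] at this
      simp at this
    obtain ⟨g, hg0, hg⟩ := Submodule.exists_le_ker_of_lt_top (W i) hlt
    refine ⟨g, (Submodule.eq_of_le_of_finrank_le hg ?_).symm⟩
    rw [hrank i]
    have h1 : LinearMap.ker g < ⊤ := by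
      rw [lt_top_iff_ne_top]
      intro h
      exact hg0 (LinearMap.ker_eq_top.1 h)
    have := Submodule.finrank_lt_finrank_of_lt h1
    rw [finrank_top] at this
    simp at this
    omega
  choose f hW using hex
  have hf : GP f := by
    intro i j l h1 h2 h3 v hi hj hl
    by_contra hv
    exact hsimple (pr ⟨v, hv⟩) i j l h1 h2 h3 ((pr_mem_line (hW i) _).2 hi)
      ((pr_mem_line (hW j) _).2 hj) ((pr_mem_line (hW l) _).2 hl)
  let S := {C : Set (Projectivization ℝ (Fin 3 → ℝ)) // IsArrTriangle W C}
  let m : S → Finset (Fin n) := fun C =>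
    Finset.univ.filter (fun i => (closure C.1 ∩ projLine (W i)).Nonempty)
  have hm : ∀ C i, i ∈ m C ↔ (closure C.1 ∩ projLine (W i)).Nonempty := by
    intro C i; simp [m]
  have hc : ∀ C, (m C).card = 3 := by
    intro C
    rw [← C.2.2, Nat.card_eq_fintype_card, Fintype.card_subtype]
  have hrep : ∀ C : S, ∃ v, Cell f v = C.1 ∧ (∀ i, f i v ≠ 0) ∧ ∀ i, i ∈ m C ↔ Touch f v i := by
    intro C
    obtain ⟨x, hx, hCx⟩ := C.2.1
    obtain ⟨v, rfl⟩ := pr_quot.surjective x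
    have hv : ∀ i, f i v.1 ≠ 0 := by
      intro i h
      exact hx (Set.mem_iUnion.2 ⟨i, (pr_mem_line (hW i) v).2 h⟩)
    rw [comp_eq hn hW v hv] at hCx
    refine ⟨v.1, hCx.symm, hv, fun i => ?_⟩
    rw [hm, hCx, closure_iff hn hW v.1 hv]
  have hinj : ∀ b c, b ≠ c → ∃ g : S → Bool, ∀ C C', b ∈ m C → c ∈ m C → b ∈ m C' → c ∈ m C' →
      g C = g C' → C = C' := by
    intro b c hbc
    obtain ⟨a, ha⟩ : ∃ a, a ∉ ({b, c} : Finset (Fin n)) := by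
      by_contra! h
      have h1 : ({b, c} : Finset (Fin n)) = Finset.univ := by ext x; simp only [h x, Finset.mem_univ]
      have h2 := Finset.card_le_two (a := b) (b := c)
      rw [h1] at h2
      simp at h2
      omega
    simp at ha
    obtain ⟨p, hpa, hpb, hpc⟩ := exists_vals hf ha.1 ha.2 hbc 1 0 0
    have hp : p ≠ 0 := by rintro rfl; simp at hpa
    have hnorm : ∀ C : S, ∃ v, b ∈ m C → c ∈ m C → (Cell f v = C.1 ∧ (∀ i, f i v ≠ 0) ∧
        (∀ i, i ∈ m C ↔ Touch f v i) ∧ ∀ j, j ≠ b → j ≠ c → 0 < f j p * f j v) := by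
      intro C
      by_cases h : b ∈ m C ∧ c ∈ m C
      · obtain ⟨v, h1, h2, h3⟩ := hrep C
        obtain ⟨v', e1, e2⟩ := normalize hf v h2 (m C) h3 (hc C) b c hbc h.1 h.2 p hp hpb hpc
        exact ⟨v', fun _ _ => ⟨e1.trans h1, e2⟩⟩
      · exact ⟨0, fun h1 h2 => absurd ⟨h1, h2⟩ h⟩
    choose r hr using hnorm
    refine ⟨fun C => decide (0 < f b (r C)), ?_⟩
    intro C C' h1 h2 h1' h2' hg
    obtain ⟨a1, a2, a3, a4⟩ := hr C h1 h2
    obtain ⟨b1, b2, b3, b4⟩ := hr C' h1' h2'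
    have hb : 0 < f b (r C) * f b (r C') := by
      have hg : (0 < f b (r C)) ↔ (0 < f b (r C')) := by simpa using hg
      rcases lt_or_gt_of_ne (a2 b) with h | h
      · have : f b (r C') < 0 := lt_of_le_of_ne (not_lt.1 (fun h' => by linarith [hg.2 h'])) (b2 b)
        exact mul_pos_of_neg_of_neg h this
      · exact mul_pos h (hg.1 h)
    have hs : ∀ j, j ≠ c → 0 < f j (r C) * f j (r C') := by
      intro j hj
      by_cases hjb : j = b
      · subst hjb; exact hb
      · exact pos_trans (a4 j hjb hj) (b4 j hjb hj)
    rcases lt_or_gt_of_ne (mul_ne_zero (a2 c) (b2 c)) with h | h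
    · exact (adj hn hf (r C) (r C') a2 b2 _ _ a3 b3 (hc C) (hc C') b c hbc h1 h2 h1' h2' hs h).elim
    · apply Subtype.ext
      rw [← a1, ← b1]
      apply cell_congr
      intro j
      by_cases hj : j = c
      · subst hj; exact h
      · exact hs j hj
  have hfin : Finite S := by
    choose g hg using hinj
    have hpair : ∀ C : S, ∃ q : Fin n × Fin n, q.1 ≠ q.2 ∧ q.1 ∈ m C ∧ q.2 ∈ m C := by
      intro C
      obtain ⟨x, y, z, h1, h2, h3, e⟩ := Finset.card_eq_three.1 (hc C)
      exact ⟨(x, y), h1, by simp [e], by simp [e]⟩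
    choose q hq using hpair
    apply Finite.of_injective (fun C : S => (q C, g _ _ (hq C).1 C))
    intro C C' h
    simp only [Prod.mk.injEq] at h
    obtain ⟨e1, e2⟩ := h
    have h1 := (hq C').2
    rw [← e1] at h1
    apply hg _ _ (hq C).1 C C' (hq C).2.1 (hq C).2.2 h1.1 h1.2
    rw [e2]
    congr 1 <;> simp [e1]
  haveI : Fintype S := Fintype.ofFinite S
  obtain ⟨h1, i, hi⟩ := count hn m hc hinj
  constructor
  · change (Nat.card S : ℝ) ≤ _
    rw [Nat.card_eq_fintype_card]
    have h2 : ((3 * Fintype.card S : ℕ) : ℝ) ≤ ((n * (n - 1) : ℕ) : ℝ) := by exact_mod_cast h1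
    push_cast [Nat.cast_sub (show 1 ≤ n by omega)] at h2
    linarith
  · refine ⟨i, le_trans (le_of_eq ?_) hi⟩
    rw [← Fintype.card_subtype, ← Nat.card_eq_fintype_card]
    apply Nat.card_congr
    refine (Equiv.subtypeSubtypeEquivSubtypeInter _ _).symm.trans
      (Equiv.subtypeEquivRight fun C => (hm C i).symm)
end
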